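/- arXiv:2002.04346 — 5 statements merged into one kernel-verified Lean document; each statement's English description precedes it below -/
import Mathlib

section
/- Let b(z) = b₀ + b₁z + ⋯ + b_q z^q be an n×n real polynomial matrix with det b(z) ≠ 0 for all complex z with |z| = 1, and suppose b admits a Wiener–Hopf factorisation whose partial indices are all equal to a single integer κ with 0 ≤ κ ≤ q, i.e. s(z) = z^κ I_n. Then there exists exactly one pair (p(z), f(z)) such that b(z) = p(z) · z^κ I_n · f(z) is a Wiener–Hopf factorisation and p(0) = I_n; moreover, in this unique representative, p(z) = I_n + p₁z + ⋯ + p_{q−κ} z^{q−κ} has degree at most q−κ and f(z) = f₀ + f₁z⁻¹ + ⋯ + f_κ z^{−κ}, i.e. f(z) = F(1/z) for a polynomial matrix F of degree at most κ. -/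
open Polynomial Matrix

/-- Evaluation of a real polynomial matrix at a complex point (entrywise). -/
noncomputable def evalMat {n : ℕ} (M : Matrix (Fin n) (Fin n) (Polynomial ℝ)) (z : ℂ) :
    Matrix (Fin n) (Fin n) ℂ :=
  M.map (fun r => Polynomial.aeval z r)

/-- A polynomial matrix viewed as a matrix over the field of real rational functions. -/
noncomputable def polyToRat {n : ℕ} (M : Matrix (Fin n) (Fin n) (Polynomial ℝ)) :
    Matrix (Fin n) (Fin n) (RatFunc ℝ) :=
  M.map (algebraMap (Polynomial ℝ) (RatFunc ℝ))

/-- The rational matrix F(1/z) obtained from a polynomial matrix F by substituting 1/z. -/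
noncomputable def invSub {n : ℕ} (F : Matrix (Fin n) (Fin n) (Polynomial ℝ)) :
    Matrix (Fin n) (Fin n) (RatFunc ℝ) :=
  F.map (fun r => Polynomial.aeval ((RatFunc.X : RatFunc ℝ)⁻¹) r)

/-- The diagonal matrix diag(z^{κ₁},…,z^{κₙ}) over ℝ(z). -/
noncomputable def sMat (n : ℕ) (κ : Fin n → ℤ) : Matrix (Fin n) (Fin n) (RatFunc ℝ) :=
  Matrix.diagonal (fun i => (RatFunc.X : RatFunc ℝ) ^ (κ i))

/-- `IsWHF b p F κ` : b(z) = p(z) · diag(z^{κᵢ}) · F(1/z) is a Wiener–Hopf factorisation. -/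
structure IsWHF {n : ℕ} (b p F : Matrix (Fin n) (Fin n) (Polynomial ℝ))
    (κ : Fin n → ℤ) : Prop where
  p_noZero : ∀ z : ℂ, ‖z‖ ≤ 1 → (evalMat p z).det ≠ 0
  F_noZero : ∀ w : ℂ, ‖w‖ ≤ 1 → (evalMat F w).det ≠ 0
  anti : ∀ i j : Fin n, i ≤ j → κ j ≤ κ i
  eq : polyToRat b = polyToRat p * sMat n κ * invSub F

/-- Partial indices of type (κ,k): the first k indices equal κ+1, the rest κ. -/
def idx (n : ℕ) (κ k : ℕ) : Fin n → ℤ := fun i => if (i : ℕ) < k then (κ : ℤ) + 1 else (κ : ℤ)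

abbrev PM (n : ℕ) := Matrix (Fin n) (Fin n) (Polynomial ℝ)

lemma polyToRat_eq {n : ℕ} (M : PM n) :
    polyToRat M = (algebraMap (Polynomial ℝ) (RatFunc ℝ)).mapMatrix M := rfl

lemma invSub_eq {n : ℕ} (M : PM n) :
    invSub M = (Polynomial.aeval (R := ℝ) ((RatFunc.X : RatFunc ℝ)⁻¹)).toRingHom.mapMatrix M := rfl

lemma evalMat_eq {n : ℕ} (M : PM n) (z : ℂ) :
    evalMat M z = (Polynomial.aeval (R := ℝ) z).toRingHom.mapMatrix M := rfl

lemma evalMat_det {n : ℕ} (M : PM n) (z : ℂ) :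
    (evalMat M z).det = Polynomial.aeval z M.det := by
  rw [evalMat_eq, ← RingHom.map_det]; rfl

lemma polyToRat_inj {n : ℕ} {M N : PM n} (h : polyToRat M = polyToRat N) : M = N := by
  ext1 i j
  exact RatFunc.algebraMap_injective ℝ (congrFun (congrFun h i) j)

lemma sMat_const (n κ : ℕ) :
    sMat n (fun _ => (κ : ℤ)) = (RatFunc.X : RatFunc ℝ) ^ κ • (1 : Matrix (Fin n) (Fin n) _) := by
  rw [Matrix.smul_one_eq_diagonal]; simp [sMat]

lemma refl_invol (K : ℕ) (f : ℝ[X]) : (f.reflect K).reflect K = f := by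
  ext k; simp [Polynomial.coeff_reflect]

lemma reflect_rat (f : ℝ[X]) (K : ℕ) (h : f.natDegree ≤ K) :
    algebraMap ℝ[X] (RatFunc ℝ) (f.reflect K) =
      RatFunc.X ^ K * Polynomial.aeval ((RatFunc.X : RatFunc ℝ)⁻¹) f := by
  have hX : (RatFunc.X : RatFunc ℝ) ≠ 0 := RatFunc.X_ne_zero
  let _ : Invertible (RatFunc.X : RatFunc ℝ) := invertibleOfNonzero hX
  have h1 := Polynomial.eval₂_reflect_mul_pow (algebraMap ℝ (RatFunc ℝ)) (RatFunc.X : RatFunc ℝ) K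
    (f.reflect K) (by
      refine (Polynomial.natDegree_reflect_le).trans ?_
      simp [h])
  rw [refl_invol, invOf_eq_inv] at h1
  rw [Polynomial.aeval_def, mul_comm, h1, ← Polynomial.aeval_def]
  rw [← RatFunc.algebraMap_X, Polynomial.aeval_algebraMap_apply, Polynomial.aeval_X_left_apply]

lemma reflect_eval (f : ℝ[X]) (K : ℕ) (h : f.natDegree ≤ K) (z : ℂ) (hz : z ≠ 0) :
    Polynomial.aeval z (f.reflect K) = z ^ K * Polynomial.aeval z⁻¹ f := by
  let _ : Invertible z := invertibleOfNonzero hz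
  have h1 := Polynomial.eval₂_reflect_mul_pow (algebraMap ℝ ℂ) z K
    (f.reflect K) (by
      refine (Polynomial.natDegree_reflect_le).trans ?_
      simp [h])
  rw [refl_invol, invOf_eq_inv] at h1
  rw [Polynomial.aeval_def, Polynomial.aeval_def, mul_comm, h1]

/-- `z^K F(1/z)` as a polynomial matrix. -/
noncomputable def reflMat {n : ℕ} (K : ℕ) (F : PM n) : PM n := F.map (Polynomial.reflect K)

lemma whf_poly {n κ K : ℕ} {b p F : PM n} (h : IsWHF b p F (fun _ => (κ : ℤ)))
    (hκ : κ ≤ K) (hF : ∀ i j, (F i j).natDegree ≤ K) :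
    p * reflMat K F = (X ^ (K - κ) : ℝ[X]) • b := by
  apply polyToRat_inj
  have h1 : polyToRat (reflMat K F) = (RatFunc.X : RatFunc ℝ) ^ K • invSub F := by
    ext1 i j
    exact reflect_rat _ _ (hF i j)
  have h2 : polyToRat ((X ^ (K - κ) : ℝ[X]) • b) =
      (RatFunc.X : RatFunc ℝ) ^ (K - κ) • polyToRat b := by
    ext1 i j
    simp [polyToRat]
  rw [h2, h.eq, sMat_const, polyToRat_eq (p * _), map_mul, ← polyToRat_eq, ← polyToRat_eq, h1]
  simp only [Matrix.mul_smul, Matrix.smul_mul, Matrix.mul_one, smul_smul, ← pow_add]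
  congr 2; omega

lemma refl_det_ne {n K : ℕ} {F : PM n} (hF : ∀ i j, (F i j).natDegree ≤ K)
    (hd : ∀ w : ℂ, ‖w‖ ≤ 1 → (evalMat F w).det ≠ 0) (z : ℂ) (hz : 1 ≤ ‖z‖) :
    Polynomial.aeval z (reflMat K F).det ≠ 0 := by
  have hz0 : z ≠ 0 := by rintro rfl; simp at hz; linarith
  have h1 : evalMat (reflMat K F) z = z ^ K • evalMat F z⁻¹ := by
    ext1 i j
    exact reflect_eval _ _ (hF i j) z hz0
  rw [← evalMat_det, h1, Matrix.det_smul]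
  refine mul_ne_zero (pow_ne_zero _ (pow_ne_zero _ hz0)) (hd _ ?_)
  rw [norm_inv]
  exact inv_le_one_of_one_le₀ hz

lemma coeff_zero_det {n : ℕ} (M : PM n) (h : (evalMat M 0).det ≠ 0) :
    (M.map (fun r => r.coeff 0)).det ≠ 0 := by
  have h1 : (M.map (fun r => r.coeff 0)).det = M.det.coeff 0 := by
    rw [Polynomial.coeff_zero_eq_eval_zero]
    have := RingHom.map_det (Polynomial.evalRingHom (0 : ℝ)) M
    rw [Polynomial.coe_evalRingHom] at this
    rw [this]; congr 1; ext i j; simp [Polynomial.coeff_zero_eq_eval_zero]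
  rw [evalMat_det, Polynomial.aeval_def, Polynomial.eval₂_at_zero] at h
  rw [h1]
  intro h0
  simp [h0] at h

lemma exists_bd {n : ℕ} (F : PM n) : ∃ K, ∀ i j, (F i j).natDegree ≤ K := by
  refine ⟨Finset.univ.sup fun x : Fin n × Fin n => (F x.1 x.2).natDegree, fun i j => ?_⟩
  exact Finset.le_sup (f := fun x : Fin n × Fin n => (F x.1 x.2).natDegree)
    (Finset.mem_univ (i, j))

/-- degree bound. -/
lemma deg_bound {n K m : ℕ} {A F B : PM n}
    (hF : ∀ i j, (F i j).natDegree ≤ K)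
    (hd : (evalMat F 0).det ≠ 0) (h : A * reflMat K F = B)
    (hB : ∀ i j, (B i j).natDegree ≤ m + K) :
    ∀ i j, (A i j).natDegree ≤ m := by
  have hstep : ∀ N, m ≤ N → (∀ i j, (A i j).natDegree ≤ N + 1) → ∀ i j, (A i j).natDegree ≤ N := by
    intro N hN hA
    have hz : A.map (fun r => r.coeff (N + 1)) * F.map (fun r => r.coeff 0) = 0 := by
      ext1 i j
      have h1 : (B i j).coeff (N + 1 + K) = 0 :=
        Polynomial.coeff_eq_zero_of_natDegree_lt (by have := hB i j; omega)
      rw [← h, Matrix.mul_apply, Polynomial.finsetSum_coeff] at h1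
      rw [Matrix.mul_apply, Matrix.zero_apply, ← h1]
      refine Finset.sum_congr rfl fun k _ => ?_
      rw [Polynomial.coeff_mul_add_eq_of_natDegree_le (hA i k)]
      · simp [reflMat, Polynomial.coeff_reflect]
      · refine (Polynomial.natDegree_reflect_le).trans ?_
        simp [hF]
    have hu := coeff_zero_det F hd
    have hA0 : A.map (fun r => r.coeff (N + 1)) = 0 := by
      have := congrArg (· * (F.map (fun r => r.coeff 0))⁻¹) hz
      simpa [Matrix.mul_assoc, Matrix.mul_nonsing_inv _ (isUnit_iff_ne_zero.2 hu)] using this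
    intro i j
    have h2 : (A i j).coeff (N + 1) = 0 := congrFun (congrFun hA0 i) j
    rw [Polynomial.natDegree_le_iff_coeff_eq_zero]
    intro k hk
    rcases Nat.lt_or_ge (N + 1) k with h3 | h3
    · exact Polynomial.coeff_eq_zero_of_natDegree_lt ((hA i j).trans_lt h3)
    · obtain rfl : k = N + 1 := by omega
      exact h2
  have key : ∀ d, (∀ i j, (A i j).natDegree ≤ m + d) → ∀ i j, (A i j).natDegree ≤ m := by
    intro d
    induction d with
    | zero => exact fun h => h
    | succ d ih => exact fun h => ih (hstep _ (by omega) h)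
  obtain ⟨D, hD⟩ := exists_bd A
  exact key D fun i j => (hD i j).trans (by omega)

lemma F_deg {n κ : ℕ} {b p F : PM n} (h : IsWHF b p F (fun _ => (κ : ℤ))) :
    ∀ i j, (F i j).natDegree ≤ κ := by
  obtain ⟨K0, hK0⟩ := exists_bd F
  set K := K0 + κ with hK
  have hF : ∀ i j, (F i j).natDegree ≤ K := fun i j => (hK0 i j).trans (by omega)
  have h1 := whf_poly h (by omega : κ ≤ K) hF
  have h2 : p.det • reflMat K F = (X ^ (K - κ) : ℝ[X]) • (p.adjugate * b) := by
    rw [← Matrix.mul_smul, ← h1, ← Matrix.mul_assoc, Matrix.adjugate_mul, Matrix.smul_mul,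
      Matrix.one_mul]
  have hcop : IsCoprime (X ^ (K - κ) : ℝ[X]) p.det := by
    apply IsCoprime.pow_left
    rw [Polynomial.isCoprime_iff_aeval_ne_zero_of_isAlgClosed ℝ ℂ]
    intro z
    by_cases hz : z = 0
    · right; rw [hz, ← evalMat_det]; exact h.p_noZero 0 (by simp)
    · left; simpa using hz
  intro i j
  have h3 : (X ^ (K - κ) : ℝ[X]) ∣ reflMat K F i j := by
    apply hcop.dvd_of_dvd_mul_left
    have := congrFun (congrFun h2 i) j
    simp only [Matrix.smul_apply, smul_eq_mul] at this
    rw [this]; exact dvd_mul_right _ _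
  rw [Polynomial.X_pow_dvd_iff] at h3
  rw [Polynomial.natDegree_le_iff_coeff_eq_zero]
  intro k hk
  rcases Nat.lt_or_ge K k with h4 | h4
  · exact Polynomial.coeff_eq_zero_of_natDegree_lt ((hF i j).trans_lt h4)
  · have := h3 (K - k) (by omega)
    rw [reflMat, Matrix.map_apply, Polynomial.coeff_reflect, Polynomial.revAt_le (by omega)] at this
    rwa [Nat.sub_sub_self h4] at this

lemma p_deg {n κ q : ℕ} {b p F : PM n} (h : IsWHF b p F (fun _ => (κ : ℤ)))
    (hb : ∀ i j, (b i j).natDegree ≤ q) (hq : κ ≤ q) :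
    ∀ i j, (p i j).natDegree ≤ q - κ := by
  have h1 := whf_poly h le_rfl (F_deg h)
  refine deg_bound (F_deg h) (h.F_noZero 0 (by simp)) h1 fun i j => ?_
  have := hb i j
  simp; omega

lemma whf_unique {n κ : ℕ} {b p F p' F' : PM n} (h : IsWHF b p F (fun _ => (κ : ℤ)))
    (h' : IsWHF b p' F' (fun _ => (κ : ℤ)))
    (h0 : p.map (fun r => r.coeff 0) = (1 : Matrix (Fin n) (Fin n) ℝ))
    (h0' : p'.map (fun r => r.coeff 0) = (1 : Matrix (Fin n) (Fin n) ℝ)) :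
    p = p' ∧ F = F' := by
  have h1 := whf_poly h le_rfl (F_deg h)
  rw [← whf_poly h' le_rfl (F_deg h')] at h1
  have hd : p'.det ≠ 0 := by
    intro hd
    have := h'.p_noZero 0 (by simp)
    rw [evalMat_det, hd] at this
    simp at this
  have hcop : IsCoprime p'.det (reflMat κ F).det := by
    rw [Polynomial.isCoprime_iff_aeval_ne_zero_of_isAlgClosed ℝ ℂ]
    intro z
    rcases le_total ‖z‖ 1 with hz | hz
    · left; rw [← evalMat_det]; exact h'.p_noZero z hz
    · right; exact refl_det_ne (F_deg h) h.F_noZero z hz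
  have cancel : ∀ A B : PM n, p' * A = p' * B → A = B := by
    intro A B hAB
    have := congrArg (p'.adjugate * ·) hAB
    simp only [← Matrix.mul_assoc, Matrix.adjugate_mul, Matrix.smul_mul, Matrix.one_mul] at this
    exact smul_right_injective _ hd this
  have h2 : (reflMat κ F).det • (p'.adjugate * p) =
      p'.det • (reflMat κ F' * (reflMat κ F).adjugate) := by
    have e1 : p'.adjugate * (p * reflMat κ F) * (reflMat κ F).adjugate =
      p'.adjugate * (p' * reflMat κ F') * (reflMat κ F).adjugate := by rw [h1]
    rw [← Matrix.mul_assoc, ← Matrix.mul_assoc, Matrix.adjugate_mul, Matrix.mul_assoc,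
      Matrix.mul_adjugate] at e1
    simpa using e1
  have h3 : ∀ i j, ∃ c, (p'.adjugate * p) i j = p'.det * c := by
    intro i j
    apply hcop.dvd_of_dvd_mul_left
    have := congrFun (congrFun h2 i) j
    simp only [Matrix.smul_apply, smul_eq_mul] at this
    rw [this]; exact dvd_mul_right _ _
  choose c hc using h3
  let C : PM n := Matrix.of c
  have hC : p'.adjugate * p = p'.det • C := by
    ext1 i j; exact hc i j
  have hpC : p = p' * C := by
    have := congrArg (p' * ·) hC
    simp only [← Matrix.mul_assoc, Matrix.mul_adjugate, Matrix.smul_mul, Matrix.one_mul,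
      Matrix.mul_smul] at this
    exact smul_right_injective _ hd this
  have hCG : C * reflMat κ F = reflMat κ F' := by
    apply cancel
    rw [← Matrix.mul_assoc, ← hpC, h1]
  have hCdeg := deg_bound (m := 0) (F_deg h) (h.F_noZero 0 (by simp)) hCG (fun i j => by
    refine (Polynomial.natDegree_reflect_le).trans ?_
    simp [F_deg h' i j])
  have hC0 : C.map (fun r => r.coeff 0) = (1 : Matrix (Fin n) (Fin n) ℝ) := by
    have e : p.map (fun r => r.coeff 0) =
        p'.map (fun r => r.coeff 0) * C.map (fun r => r.coeff 0) := by
      ext i j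
      rw [hpC]
      simp [Matrix.mul_apply, Polynomial.finsetSum_coeff, Polynomial.mul_coeff_zero]
    rw [h0, h0', Matrix.one_mul] at e
    exact e.symm
  have hC1 : C = 1 := by
    ext1 i j
    rw [Polynomial.eq_C_of_natDegree_le_zero (hCdeg i j)]
    have := congrFun (congrFun hC0 i) j
    simp only [Matrix.map_apply] at this
    rw [this]
    by_cases hij : i = j
    · subst hij; simp
    · simp [hij]
  refine ⟨by rw [hpC, hC1, Matrix.mul_one], ?_⟩
  rw [hC1, Matrix.one_mul] at hCG
  ext1 i j
  have := congrFun (congrFun hCG i) j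
  simp only [reflMat, Matrix.map_apply] at this
  rw [← refl_invol κ (F i j), this, refl_invol]

lemma whf_normalise {n κ : ℕ} {b p F : PM n} (h : IsWHF b p F (fun _ => (κ : ℤ))) :
    ∃ p' F' : PM n, IsWHF b p' F' (fun _ => (κ : ℤ)) ∧
      p'.map (fun r => r.coeff 0) = (1 : Matrix (Fin n) (Fin n) ℝ) := by
  set P := p.map (fun r => r.coeff 0) with hP
  have hu : IsUnit P.det := isUnit_iff_ne_zero.2 (coeff_zero_det p (h.p_noZero 0 (by simp)))
  let c : Matrix (Fin n) (Fin n) ℝ →+* PM n := (Polynomial.C : ℝ →+* ℝ[X]).mapMatrix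
  have hc1 : c P⁻¹ * c P = 1 := by
    rw [← map_mul, Matrix.nonsing_inv_mul _ hu, map_one]
  have hdet : (c P⁻¹).det * (c P).det = 1 := by rw [← Matrix.det_mul, hc1, Matrix.det_one]
  have hev : ∀ z : ℂ, Polynomial.aeval z (c P⁻¹).det * Polynomial.aeval z (c P).det = 1 := by
    intro z; rw [← map_mul, hdet, map_one]
  have hcc : invSub (c P) = polyToRat (c P) := by
    ext1 i j
    simp [invSub, polyToRat, c]
  refine ⟨p * c P⁻¹, c P * F, ⟨fun z hz => ?_, fun z hz => ?_, h.anti, ?_⟩, ?_⟩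
  · rw [evalMat_det, Matrix.det_mul, map_mul, ← evalMat_det]
    exact mul_ne_zero (h.p_noZero z hz) (left_ne_zero_of_mul_eq_one (hev z))
  · rw [evalMat_det, Matrix.det_mul, map_mul, ← evalMat_det F]
    exact mul_ne_zero (right_ne_zero_of_mul_eq_one (hev z)) (h.F_noZero z hz)
  · have e1 : invSub (c P * F) = polyToRat (c P) * invSub F := by
      rw [← hcc]; simp only [invSub_eq, map_mul]
    have e2 : polyToRat (p * c P⁻¹) = polyToRat p * polyToRat (c P⁻¹) := by
      simp only [polyToRat_eq, map_mul]
    have e3 : polyToRat (c P⁻¹) * polyToRat (c P) = 1 := by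
      simp only [polyToRat_eq, ← map_mul, hc1, map_one]
    rw [h.eq, e1, e2, sMat_const]
    simp only [Matrix.mul_smul, Matrix.smul_mul, Matrix.mul_one]
    rw [Matrix.mul_assoc, ← Matrix.mul_assoc (polyToRat (c P⁻¹)), e3, Matrix.one_mul]
  · have e : (p * c P⁻¹).map (fun r => r.coeff 0) = P * P⁻¹ := by
      ext i j
      simp [Matrix.mul_apply, Polynomial.finsetSum_coeff, Polynomial.mul_coeff_zero, c, hP]
    rw [e, Matrix.mul_nonsing_inv _ hu]

/-- uniqueness of the WHF representative with p(0) = Iₙ when all partial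
indices are equal to κ, together with the degree bounds on p and F. -/
theorem stmt0 {n q : ℕ} (b : Matrix (Fin n) (Fin n) (Polynomial ℝ))
    (hbdeg : ∀ i j, (b i j).degree ≤ (q : WithBot ℕ))
    (hcirc : ∀ z : ℂ, ‖z‖ = 1 → (evalMat b z).det ≠ 0)
    (κ : ℕ) (hκq : κ ≤ q)
    (hexists : ∃ p F : Matrix (Fin n) (Fin n) (Polynomial ℝ),
      IsWHF b p F (fun _ => (κ : ℤ))) :
    (∃! pF : Matrix (Fin n) (Fin n) (Polynomial ℝ) × Matrix (Fin n) (Fin n) (Polynomial ℝ),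
        IsWHF b pF.1 pF.2 (fun _ => (κ : ℤ)) ∧
        pF.1.map (fun r => r.coeff 0) = (1 : Matrix (Fin n) (Fin n) ℝ)) ∧
    (∀ p F : Matrix (Fin n) (Fin n) (Polynomial ℝ),
      IsWHF b p F (fun _ => (κ : ℤ)) →
      p.map (fun r => r.coeff 0) = (1 : Matrix (Fin n) (Fin n) ℝ) →
      (∀ i j, (p i j).degree ≤ ((q - κ : ℕ) : WithBot ℕ)) ∧
      (∀ i j, (F i j).degree ≤ ((κ : ℕ) : WithBot ℕ))) := by

  have hb : ∀ i j, (b i j).natDegree ≤ q := fun i j =>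
    Polynomial.natDegree_le_of_degree_le (hbdeg i j)
  refine ⟨?_, ?_⟩
  · obtain ⟨p, F, h⟩ := hexists
    obtain ⟨p', F', h', h0'⟩ := whf_normalise h
    refine ⟨(p', F'), ⟨h', h0'⟩, ?_⟩
    rintro ⟨p2, F2⟩ ⟨h2, h02⟩
    obtain ⟨e1, e2⟩ := whf_unique h2 h' h02 h0'
    exact Prod.ext e1 e2
  · intro p F h _
    exact ⟨fun i j => Polynomial.degree_le_of_natDegree_le (p_deg h hb hκq i j),
      fun i j => Polynomial.degree_le_of_natDegree_le (F_deg h i j)⟩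
end

section
/- Identify each tuple (b₀, b₁, …, b_q) of n×n real matrices with a point of ℝ^{n²(q+1)} and with the polynomial matrix b(z) = b₀ + b₁z + ⋯ + b_q z^q. Let S ⊆ ℝ^{n²(q+1)} be the set of tuples for which det b(z) ≠ 0 for all complex z with |z| = 1; S is open. There exists a subset U ⊆ S, open and dense in S, such that every b ∈ U admits a Wiener–Hopf factorisation b(z) = p(z) s(z) f(z) whose partial indices are of type (κ,k), i.e. s(z) = diag(z^{κ+1},…,z^{κ+1}, z^{κ},…,z^{κ}) with the first k entries z^{κ+1} and the last n−k entries z^{κ}, for some integers satisfying either 0 ≤ κ ≤ q−1 and k ∈ {0,…,n−1}, or (κ,k) = (q,0). -/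
open Polynomial Matrix

/-- The polynomial matrix b₀ + b₁ z + ⋯ + b_q z^q built from the coefficient tuple c. -/
noncomputable def polyOf {n q : ℕ} (c : Fin (q + 1) → Matrix (Fin n) (Fin n) ℝ) :
    Matrix (Fin n) (Fin n) (Polynomial ℝ) :=
  Matrix.of fun i j => ∑ l : Fin (q + 1), Polynomial.C (c l i j) * Polynomial.X ^ (l : ℕ)


/-! ### Continuous families of polynomials -/

/-- A family of real polynomials whose coefficients depend continuously on the parameter. -/
def CC {Θ : Type*} [TopologicalSpace Θ] (f : Θ → ℝ[X]) : Prop :=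
  ∀ m, Continuous fun θ => (f θ).coeff m

namespace CC
variable {Θ : Type*} [TopologicalSpace Θ]

lemma const (P : ℝ[X]) : CC (fun _ : Θ => P) := fun _ => continuous_const

lemma add {f g : Θ → ℝ[X]} (hf : CC f) (hg : CC g) : CC (fun θ => f θ + g θ) := fun m => by
  simp only [coeff_add]; exact (hf m).add (hg m)

lemma mul {f g : Θ → ℝ[X]} (hf : CC f) (hg : CC g) : CC (fun θ => f θ * g θ) := fun m => by
  simp only [coeff_mul]
  exact continuous_finsetSum _ fun x _ => (hf _).mul (hg _)

lemma sum {ι : Type*} (s : Finset ι) {f : ι → Θ → ℝ[X]} (hf : ∀ i ∈ s, CC (f i)) :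
    CC (fun θ => ∑ i ∈ s, f i θ) := fun m => by
  simp only [finsetSum_coeff]
  exact continuous_finsetSum _ fun x hx => hf x hx m

lemma prod {ι : Type*} (s : Finset ι) {f : ι → Θ → ℝ[X]} (hf : ∀ i, CC (f i)) :
    CC (fun θ => ∏ i ∈ s, f i θ) := by
  classical
  induction s using Finset.induction_on with
  | empty => simpa using const 1
  | insert a s ha ih =>
    simp only [Finset.prod_insert ha]
    exact (hf a).mul ih

lemma C {f : Θ → ℝ} (hf : Continuous f) : CC (fun θ => Polynomial.C (f θ)) := fun m => by
  simp only [coeff_C]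
  split_ifs
  · exact hf
  · exact continuous_const

lemma ofFn {N : ℕ} {f : Θ → (Fin N → ℝ)} (hf : Continuous f) :
    CC (fun θ => Polynomial.ofFn N (f θ)) := fun m => by
  by_cases h : m < N
  · simp only [ofFn_coeff_eq_val_of_lt _ h]
    exact (continuous_apply _).comp hf
  · simp only [ofFn_coeff_eq_zero_of_ge _ (not_lt.mp h)]
    exact continuous_const

lemma comp {Ξ : Type*} [TopologicalSpace Ξ] {f : Θ → ℝ[X]} (hf : CC f) {g : Ξ → Θ}
    (hg : Continuous g) : CC (fun ξ => f (g ξ)) := fun m => (hf m).comp hg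

lemma det {n : ℕ} {M : Θ → Matrix (Fin n) (Fin n) ℝ[X]} (hM : ∀ i j, CC (fun θ => M θ i j)) :
    CC (fun θ => (M θ).det) := by
  simp only [Matrix.det_apply']
  refine sum _ fun σ _ => mul (const _) (prod _ fun i => hM _ _)

lemma adjugate {n : ℕ} {M : Θ → Matrix (Fin n) (Fin n) ℝ[X]} (hM : ∀ i j, CC (fun θ => M θ i j))
    (i j : Fin n) : CC (fun θ => (M θ).adjugate i j) := by
  simp only [Matrix.adjugate_apply]
  refine det fun a b => ?_
  by_cases h : a = j
  · subst h; simpa using const _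
  · simpa [Matrix.updateRow_ne h] using hM a b

lemma toFn {f : Θ → ℝ[X]} (hf : CC f) (N : ℕ) : Continuous fun θ => Polynomial.toFn N (f θ) :=
  continuous_pi fun i => hf i

lemma aeval {f : Θ → ℝ[X]} (hf : CC f) {D : ℕ} (hD : ∀ θ, (f θ).natDegree < D) :
    Continuous fun x : Θ × ℂ => Polynomial.aeval x.2 (f x.1) := by
  simp only [fun x : Θ × ℂ => aeval_eq_sum_range' (hD x.1) x.2]
  refine continuous_finsetSum _ fun i _ => ?_
  exact ((hf i).comp continuous_fst).smul (continuous_snd.pow i)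

lemma reflect {f : Θ → ℝ[X]} (hf : CC f) (N : ℕ) : CC (fun θ => (f θ).reflect N) := fun m => by
  simp only [coeff_reflect]; exact hf _

end CC

/-- Nonvanishing on a compact set is an open condition. -/
lemma eventually_ne_zero_on_compact {Θ X Z : Type*} [TopologicalSpace Θ] [TopologicalSpace X]
    [TopologicalSpace Z] [T1Space Z] [Zero Z] {K : Set X} (hK : IsCompact K) {f : Θ × X → Z}
    (hf : Continuous f) {θ₀ : Θ} (h : ∀ x ∈ K, f (θ₀, x) ≠ 0) :
    ∀ᶠ θ in nhds θ₀, ∀ x ∈ K, f (θ, x) ≠ 0 := by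
  refine hK.eventually_forall_of_forall_eventually fun x hx => ?_
  exact hf.continuousAt.eventually_ne (h x hx)

lemma isOpen_ne_zero_on_compact {Θ X Z : Type*} [TopologicalSpace Θ] [TopologicalSpace X]
    [TopologicalSpace Z] [T1Space Z] [Zero Z] {K : Set X} (hK : IsCompact K) {f : Θ × X → Z}
    (hf : Continuous f) : IsOpen {θ | ∀ x ∈ K, f (θ, x) ≠ 0} :=
  isOpen_iff_mem_nhds.mpr fun _ h => eventually_ne_zero_on_compact hK hf h

/-! ### Determinants of polynomial matrices -/

lemma coeff_prod_sum {R ι : Type*} [CommRing R] (s : Finset ι) (f : ι → R[X]) (d : ι → ℕ)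
    (h : ∀ i ∈ s, (f i).natDegree ≤ d i) :
    (∏ i ∈ s, f i).natDegree ≤ ∑ i ∈ s, d i ∧
    (∏ i ∈ s, f i).coeff (∑ i ∈ s, d i) = ∏ i ∈ s, (f i).coeff (d i) := by
  classical
  induction s using Finset.induction_on with
  | empty => simp
  | insert a s ha ih =>
    obtain ⟨h1, h2⟩ := ih fun i hi => h i (Finset.mem_insert_of_mem hi)
    have h0 := h a (Finset.mem_insert_self _ _)
    simp only [Finset.prod_insert ha, Finset.sum_insert ha]
    exact ⟨natDegree_mul_le_of_le h0 h1, by rw [coeff_mul_add_eq_of_natDegree_le h0 h1, h2]⟩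

lemma natDegree_det_le {R : Type*} [CommRing R] {n : ℕ} (M : Matrix (Fin n) (Fin n) R[X])
    (d : Fin n → ℕ) (h : ∀ i j, (M i j).natDegree ≤ d j) : M.det.natDegree ≤ ∑ j, d j := by
  rw [Matrix.det_apply]
  refine natDegree_sum_le_of_forall_le _ _ fun σ _ => ?_
  refine (natDegree_smul_le _ _).trans ?_
  exact (coeff_prod_sum Finset.univ (fun i => M (σ i) i) d fun i _ => h _ _).1

lemma coeff_det_sum {R : Type*} [CommRing R] {n : ℕ} (M : Matrix (Fin n) (Fin n) R[X])
    (d : Fin n → ℕ) (h : ∀ i j, (M i j).natDegree ≤ d j) :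
    M.det.coeff (∑ j, d j) = (Matrix.of fun i j => (M i j).coeff (d j)).det := by
  rw [Matrix.det_apply, Matrix.det_apply, finsetSum_coeff]
  refine Finset.sum_congr rfl fun σ _ => ?_
  rw [coeff_smul, (coeff_prod_sum Finset.univ (fun i => M (σ i) i) d fun i _ => h _ _).2]
  rfl

lemma natDegree_adjugate_le {R : Type*} [CommRing R] {n : ℕ} (M : Matrix (Fin n) (Fin n) R[X])
    (q : ℕ) (h : ∀ i j, (M i j).natDegree ≤ q) (i j : Fin n) :
    (M.adjugate i j).natDegree ≤ n * q := by
  rw [Matrix.adjugate_apply]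
  refine (natDegree_det_le _ (fun _ => q) fun a b => ?_).trans (by simp)
  by_cases hj : a = j
  · subst hj
    rw [Matrix.updateRow_self]
    by_cases hb : b = i
    · subst hb; simp
    · simp [hb]
  · simpa [Matrix.updateRow_ne hj] using h a b

/-! ### The matrix `polyOf` -/

lemma polyOf_coeff {n q : ℕ} (c : Fin (q + 1) → Matrix (Fin n) (Fin n) ℝ) (i j : Fin n) (m : ℕ) :
    (polyOf c i j).coeff m = if h : m < q + 1 then c ⟨m, h⟩ i j else 0 := by
  simp only [polyOf, Matrix.of_apply, finsetSum_coeff, coeff_C_mul, coeff_X_pow]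
  split_ifs with h
  · rw [Finset.sum_eq_single ⟨m, h⟩]
    · simp
    · intro b _ hb
      have : m ≠ (b : ℕ) := fun h' => hb (Fin.ext h'.symm)
      simp [this]
    · simp
  · refine Finset.sum_eq_zero fun l _ => ?_
    have : m ≠ (l : ℕ) := by have := l.2; omega
    simp [this]

lemma polyOf_natDegree {n q : ℕ} (c : Fin (q + 1) → Matrix (Fin n) (Fin n) ℝ) (i j : Fin n) :
    (polyOf c i j).natDegree ≤ q := by
  rw [natDegree_le_iff_coeff_eq_zero]
  intro m hm
  rw [polyOf_coeff, dif_neg (by omega)]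

lemma polyOf_cc {n q : ℕ} (i j : Fin n) :
    CC (fun c : Fin (q + 1) → Matrix (Fin n) (Fin n) ℝ => polyOf c i j) := fun m => by
  simp only [polyOf_coeff]
  split_ifs
  · exact (continuous_apply _).matrix_elem i j
  · exact continuous_const

/-- The tuple of coefficients of a polynomial matrix. -/
noncomputable def tupleOf {n : ℕ} (q : ℕ) (M : Matrix (Fin n) (Fin n) ℝ[X]) :
    Fin (q + 1) → Matrix (Fin n) (Fin n) ℝ := fun l => Matrix.of fun i j => (M i j).coeff l

lemma polyOf_tupleOf {n q : ℕ} (M : Matrix (Fin n) (Fin n) ℝ[X])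
    (h : ∀ i j, (M i j).natDegree ≤ q) : polyOf (tupleOf q M) = M := by
  ext i j m
  rw [polyOf_coeff]
  split_ifs with hm
  · rfl
  · rw [coeff_eq_zero_of_natDegree_lt]
    have := h i j
    omega

lemma det_evalMat {n : ℕ} (M : Matrix (Fin n) (Fin n) ℝ[X]) (z : ℂ) :
    (evalMat M z).det = aeval z M.det := by
  have := RingHom.map_det (aeval z : ℝ[X] →ₐ[ℝ] ℂ).toRingHom M
  exact this.symm

lemma natDegree_det_polyOf {n q : ℕ} (c : Fin (q + 1) → Matrix (Fin n) (Fin n) ℝ) :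
    (polyOf c).det.natDegree ≤ n * q :=
  (natDegree_det_le _ (fun _ => q) (polyOf_natDegree c)).trans (by simp)

lemma isOpen_S {n q : ℕ} : IsOpen {c : Fin (q + 1) → Matrix (Fin n) (Fin n) ℝ |
      ∀ z : ℂ, ‖z‖ = 1 → (evalMat (polyOf c) z).det ≠ 0} := by
  have h := isOpen_ne_zero_on_compact (isCompact_sphere (0 : ℂ) 1)
    (CC.aeval (CC.det (polyOf_cc (n := n) (q := q)))
      (fun c => Nat.lt_succ_of_le (natDegree_det_polyOf c)))
  convert h using 4
  simp [det_evalMat]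

/-! ### Division and balanced vectors -/

/-- Right division by a column-monic polynomial matrix. -/
lemma exists_division {n : ℕ} (d : Fin n → ℕ) (W : Matrix (Fin n) (Fin n) ℝ[X])
    (hW : ∀ i j, (W i j).degree < d j) (v : Fin n → ℝ[X]) :
    ∃ x r : Fin n → ℝ[X], (∀ j, (r j).degree < d j) ∧
      v = x ᵥ* (Matrix.diagonal (fun j => (X : ℝ[X]) ^ d j) + W) + r := by
  set g := Matrix.diagonal (fun j => (X : ℝ[X]) ^ d j) + W with hg
  let T : Submodule ℝ (Fin n → ℝ[X]) :=
    { carrier := {v | ∃ x r : Fin n → ℝ[X], (∀ j, (r j).degree < d j) ∧ v = x ᵥ* g + r}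
      add_mem' := by
        rintro _ _ ⟨x, r, hr, rfl⟩ ⟨x', r', hr', rfl⟩
        refine ⟨x + x', r + r', fun j => ?_, ?_⟩
        · exact (degree_add_le _ _).trans_lt (max_lt (hr j) (hr' j))
        · rw [Matrix.add_vecMul]; abel
      zero_mem' := ⟨0, 0, fun j => by simp [bot_lt_iff_ne_bot], by simp⟩
      smul_mem' := by
        rintro a _ ⟨x, r, hr, rfl⟩
        refine ⟨a • x, a • r, fun j => ?_, ?_⟩
        · exact (degree_smul_le _ _).trans_lt (hr j)
        · rw [smul_add, Matrix.smul_vecMul] }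
  have hT1 : ∀ x : Fin n → ℝ[X], x ᵥ* g ∈ T := fun x =>
    ⟨x, 0, fun j => by simp [bot_lt_iff_ne_bot], by simp⟩
  have hT2 : ∀ r : Fin n → ℝ[X], (∀ j, (r j).degree < d j) → r ∈ T := fun r hr =>
    ⟨0, r, hr, by simp⟩
  have hT3 : ∀ j, (Pi.single j (X ^ d j) : Fin n → ℝ[X]) ∈ T := by
    intro j
    have h1 : (Pi.single j (X ^ d j) : Fin n → ℝ[X]) = (Pi.single j 1) ᵥ* g - W j := by
      rw [Matrix.single_one_vecMul]
      ext1 l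
      by_cases hl : l = j
      · subst hl; simp [hg, Matrix.row]
      · simp [hg, Matrix.row, hl, Matrix.diagonal_apply_ne' _ hl]
    rw [h1]
    exact T.sub_mem (hT1 _) (hT2 _ (hW j))
  have hT4 : ∀ v ∈ T, (X : ℝ[X]) • v ∈ T := by
    rintro _ ⟨x, r, hr, rfl⟩
    rw [smul_add]
    refine T.add_mem ?_ ?_
    · rw [← Matrix.smul_vecMul]; exact hT1 _
    · have : (X : ℝ[X]) • r = (fun j => (X * r j).erase (d j)) +
          ∑ j, (X * r j).coeff (d j) • (Pi.single j (X ^ d j) : Fin n → ℝ[X]) := by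
        ext1 l
        simp only [Pi.smul_apply, Pi.add_apply, Finset.sum_apply, smul_eq_mul]
        rw [Finset.sum_eq_single l]
        · rw [Pi.single_eq_same, smul_eq_C_mul, C_mul_X_pow_eq_monomial, add_comm,
            monomial_add_erase]
        · intro b _ hb; simp [Pi.single_eq_of_ne hb.symm]
        · simp
      rw [this]
      refine T.add_mem (hT2 _ fun j => ?_) (T.sum_mem fun j _ => T.smul_mem _ (hT3 j))
      rw [degree_lt_iff_coeff_zero]
      intro m hm
      rw [coeff_erase]
      split_ifs with h
      · rfl
      · have hlt : d j < m := lt_of_le_of_ne hm (Ne.symm h)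
        obtain ⟨m', rfl⟩ : ∃ m', m = m' + 1 := ⟨m - 1, by omega⟩
        rw [coeff_X_mul]
        exact (degree_lt_iff_coeff_zero _ _).mp (hr j) m' (by omega)
  have hT5 : ∀ j m, (Pi.single j (X ^ m) : Fin n → ℝ[X]) ∈ T := by
    intro j m
    induction m with
    | zero =>
      by_cases h : d j = 0
      · have := hT3 j
        rwa [h] at this
      · refine hT2 _ fun l => ?_
        by_cases hl : l = j
        · subst hl; simpa using Nat.pos_of_ne_zero h
        · simp [Pi.single_eq_of_ne hl, bot_lt_iff_ne_bot]
    | succ m ih =>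
      have := hT4 _ ih
      rwa [← Pi.single_smul, smul_eq_mul, ← pow_succ'] at this
  have hv : v = ∑ j, ∑ m ∈ (v j).support, (v j).coeff m • (Pi.single j (X ^ m) : Fin n → ℝ[X]) := by
    ext1 l
    simp only [Finset.sum_apply, Pi.smul_apply]
    rw [Finset.sum_eq_single l]
    · conv_lhs => rw [as_sum_support_C_mul_X_pow (v l)]
      simp [smul_eq_C_mul]
    · intro b _ hb; simp [Pi.single_eq_of_ne hb.symm]
    · simp
  have : v ∈ T := by
    rw [hv]
    exact T.sum_mem fun j _ => T.sum_mem fun m _ => T.smul_mem _ (hT5 j m)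
  exact this

/-- No nonzero vector with column degrees bounded by `d` is orthogonal to `a` modulo `χ`. -/
def Bal {n : ℕ} (d : Fin n → ℕ) (χ : ℝ[X]) (a : Fin n → ℝ[X]) : Prop :=
  ∀ v : Fin n → ℝ[X], (∀ j, (v j).degree < d j) → χ ∣ ∑ j, v j * a j → v = 0

/-- The linear map `v ↦ v · a mod χ` in coordinates. -/
noncomputable def balMap {n : ℕ} (d : Fin n → ℕ) (χ : ℝ[X]) (N : ℕ) (a : Fin n → ℝ[X]) :
    ((j : Fin n) → Fin (d j) → ℝ) →ₗ[ℝ] (Fin N → ℝ) :=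
  (toFn N) ∘ₗ (modByMonicHom χ) ∘ₗ
    (∑ j, (LinearMap.mulRight ℝ (a j)) ∘ₗ (ofFn (d j)) ∘ₗ (LinearMap.proj j))

lemma balMap_apply {n : ℕ} (d : Fin n → ℕ) (χ : ℝ[X]) (N : ℕ) (a : Fin n → ℝ[X])
    (v : (j : Fin n) → Fin (d j) → ℝ) :
    balMap d χ N a v = toFn N ((∑ j, ofFn (d j) (v j) * a j) %ₘ χ) := by
  simp [balMap, modByMonicHom]

lemma toFn_eq_zero {N : ℕ} {P : ℝ[X]} (h : P.degree < N) : toFn N P = 0 ↔ P = 0 := by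
  constructor
  · intro h0
    ext m
    by_cases hm : m < N
    · have := congrFun h0 ⟨m, hm⟩
      simpa [toFn] using this
    · rw [coeff_zero]
      exact (degree_lt_iff_coeff_zero _ _).mp h m (not_lt.mp hm)
  · rintro rfl; simp

lemma ofFn_toFn {N : ℕ} {P : ℝ[X]} (h : P.degree < N) : ofFn N (toFn N P) = P := by
  ext m
  by_cases hm : m < N
  · rw [ofFn_coeff_eq_val_of_lt _ hm]; rfl
  · rw [ofFn_coeff_eq_zero_of_ge _ (not_lt.mp hm)]
    exact ((degree_lt_iff_coeff_zero _ _).mp h m (not_lt.mp hm)).symm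

lemma degree_mod_lt {χ : ℝ[X]} (hχ : χ.Monic) {N : ℕ} (hN : χ.natDegree = N) (P : ℝ[X]) :
    (P %ₘ χ).degree < N := by
  have := degree_modByMonic_lt P hχ
  rwa [degree_eq_natDegree hχ.ne_zero, hN] at this

lemma balMap_eq_zero {n : ℕ} {d : Fin n → ℕ} {χ : ℝ[X]} (hχ : χ.Monic) {N : ℕ}
    (hN : χ.natDegree = N) (a : Fin n → ℝ[X]) (v : (j : Fin n) → Fin (d j) → ℝ) :
    balMap d χ N a v = 0 ↔ χ ∣ ∑ j, ofFn (d j) (v j) * a j := by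
  rw [balMap_apply, toFn_eq_zero (degree_mod_lt hχ hN _), modByMonic_eq_zero_iff_dvd hχ]

lemma bal_iff_injective {n : ℕ} {d : Fin n → ℕ} {χ : ℝ[X]} (hχ : χ.Monic) {N : ℕ}
    (hN : χ.natDegree = N) (a : Fin n → ℝ[X]) :
    Bal d χ a ↔ Function.Injective (balMap d χ N a) := by
  rw [injective_iff_map_eq_zero]
  constructor
  · intro h v hv
    rw [balMap_eq_zero hχ hN] at hv
    have := h _ (fun j => ofFn_degree_lt _) hv
    ext1 j
    exact injective_ofFn _ (by simpa using congrFun this j)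
  · intro h v hv hd
    have := h (fun j => toFn (d j) (v j)) (by
      rw [balMap_eq_zero hχ hN]
      simpa only [ofFn_toFn (hv _)] using hd)
    ext1 j
    have h2 := congrFun this j
    exact (toFn_eq_zero (hv j)).mp h2

lemma Bal.surj {n : ℕ} {d : Fin n → ℕ} {χ : ℝ[X]} (hχ : χ.Monic)
    (hN : χ.natDegree = ∑ j, d j) {a : Fin n → ℝ[X]} (h : Bal d χ a) (P : ℝ[X]) :
    ∃ v : Fin n → ℝ[X], (∀ j, (v j).degree < d j) ∧ χ ∣ P + ∑ j, v j * a j := by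
  have hinj := (bal_iff_injective hχ hN a).mp h
  have hs := (LinearMap.injective_iff_surjective_of_finrank_eq_finrank
    (by simp [Module.finrank_pi_fintype])).mp hinj
  obtain ⟨v, hv⟩ := hs (toFn _ ((-P) %ₘ χ))
  refine ⟨fun j => ofFn (d j) (v j), fun j => ofFn_degree_lt _, ?_⟩
  rw [balMap_apply, ← sub_eq_zero, ← map_sub, toFn_eq_zero, ← sub_modByMonic,
    modByMonic_eq_zero_iff_dvd hχ] at hv
  · convert hv using 1; ring
  · exact (degree_sub_le _ _).trans_lt (max_lt (degree_mod_lt hχ hN _) (degree_mod_lt hχ hN _))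

/-! ### From balanced data to a Wiener–Hopf factorisation -/

/-- Natural number version of `idx`. -/
def dd (n κ k : ℕ) : Fin n → ℕ := fun j => if (j : ℕ) < k then κ + 1 else κ

/-- `χ`, `ψ` have their roots strictly inside, resp. strictly outside of the unit disc. -/
structure Split (χ ψ : ℝ[X]) : Prop where
  monic : χ.Monic
  inside : ∀ z : ℂ, aeval z χ = 0 → ‖z‖ < 1
  outside : ∀ z : ℂ, aeval z ψ = 0 → 1 < ‖z‖

/-- Two real polynomials without common complex zeros are coprime. -/
lemma isCoprime_of_no_common_root {f g : ℝ[X]}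
    (h : ∀ z : ℂ, aeval z f = 0 → aeval z g ≠ 0) : IsCoprime f g := by
  rw [← Polynomial.isCoprime_map (algebraMap ℝ ℂ)]
  refine (isCoprime_iff_aeval_ne_zero_of_isAlgClosed (K := ℂ) ℂ _ _).mpr fun z => ?_
  by_cases hz : aeval z f = 0
  · right; simpa using h z hz
  · left; simpa using hz

lemma Split.coprime {χ ψ : ℝ[X]} (h : Split χ ψ) : IsCoprime χ ψ :=
  isCoprime_of_no_common_root fun z h1 h2 => (h.inside z h1).not_gt (h.outside z h2)

lemma aeval_reflect {K : Type*} [Field K] [Algebra ℝ K] {w : K} (hw : w ≠ 0) {N : ℕ} {f : ℝ[X]}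
    (hf : f.natDegree ≤ N) : aeval w⁻¹ (f.reflect N) * w ^ N = aeval w f := by
  let _ := invertibleOfNonzero hw
  have := eval₂_reflect_mul_pow (algebraMap ℝ K) w N f hf
  simpa [aeval_def] using this

lemma exists_whf {n : ℕ} (b : Matrix (Fin n) (Fin n) ℝ[X]) (κ k : ℕ) (χ ψ : ℝ[X])
    (y : Fin n → ℝ[X]) (hs : Split χ ψ) (hN : χ.natDegree = ∑ j, dd n κ k j)
    (hdet : b.det = χ * ψ) (hbal : Bal (dd n κ k) χ (b.adjugate *ᵥ y)) :
    ∃ p F : Matrix (Fin n) (Fin n) ℝ[X], IsWHF b p F (idx n κ k) := by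
  set d := dd n κ k with hd
  set a := b.adjugate *ᵥ y with ha
  have hχ := hs.monic
  choose W hW1 hW2 using fun i => hbal.surj hχ hN (X ^ d i * a i)
  set g : Matrix (Fin n) (Fin n) ℝ[X] :=
    Matrix.diagonal (fun j => (X : ℝ[X]) ^ d j) + Matrix.of W with hg
  have hga : ∀ i, χ ∣ (g *ᵥ a) i := by
    intro i
    have : (g *ᵥ a) i = X ^ d i * a i + ∑ j, W i j * a j := by
      rw [hg, Matrix.add_mulVec, Pi.add_apply, Matrix.mulVec_diagonal]
      rfl
    rw [this]; exact hW2 i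
  have hga' : ∀ x : Fin n → ℝ[X], χ ∣ ∑ j, (x ᵥ* g) j * a j := by
    intro x
    have : ∑ j, (x ᵥ* g) j * a j = ∑ i, x i * (g *ᵥ a) i := by
      have := Matrix.dotProduct_mulVec x g a
      exact this.symm
    rw [this]
    exact Finset.dvd_sum fun i _ => (hga i).mul_left _
  have hdiv : ∀ v : Fin n → ℝ[X], χ ∣ ∑ j, v j * a j → ∃ x, v = x ᵥ* g := by
    intro v hv
    obtain ⟨x, r, hr, rfl⟩ := exists_division d (Matrix.of W) hW1 v
    refine ⟨x, ?_⟩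
    have : r = 0 := by
      refine hbal r hr ?_
      have h1 : ∑ j, r j * a j = ∑ j, (x ᵥ* g + r) j * a j - ∑ j, (x ᵥ* g) j * a j := by
        rw [← Finset.sum_sub_distrib]
        refine Finset.sum_congr rfl fun j _ => ?_
        rw [Pi.add_apply]; ring
      rw [h1]
      exact dvd_sub hv (hga' x)
    rw [this, add_zero]
  have hb : ∀ i, χ ∣ ∑ j, b i j * a j := by
    intro i
    have h1 : b *ᵥ a = b.det • y := by
      rw [ha, Matrix.mulVec_mulVec, Matrix.mul_adjugate, Matrix.smul_mulVec, Matrix.one_mulVec]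
    have h2 : ∑ j, b i j * a j = b.det * y i := congrFun h1 i
    rw [h2, hdet, mul_assoc]
    exact dvd_mul_right _ _
  choose p hp using fun i => hdiv (b i) (hb i)
  have hbp : b = Matrix.of p * g := by
    ext1 i j
    rw [hp i]; rfl
  choose h hh using fun i => hdiv (Pi.single i χ) (by
    rw [Finset.sum_eq_single i]
    · simp
    · intro j _ hj; simp [Pi.single_eq_of_ne hj]
    · simp)
  have hχg : Matrix.of h * g = χ • (1 : Matrix (Fin n) (Fin n) ℝ[X]) := by
    ext1 i j
    have : (Matrix.of h * g) i j = (h i ᵥ* g) j := rfl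
    rw [this, ← hh i]
    by_cases hij : i = j
    · subst hij; simp
    · simp [hij]
  have hgχ : g.det ∣ χ ^ n := by
    have := congrArg Matrix.det hχg
    rw [Matrix.det_mul, Matrix.det_smul, Matrix.det_one, mul_one, Fintype.card_fin] at this
    exact ⟨_, by rw [← this, mul_comm]⟩
  have hdg : (Matrix.of p).det * g.det = χ * ψ := by rw [← Matrix.det_mul, ← hbp, hdet]
  have hgdvd : g.det ∣ χ := by
    have h1 : IsCoprime g.det ψ := (hs.coprime.pow_left (m := n)).of_isCoprime_of_dvd_left hgχ
    exact h1.dvd_of_dvd_mul_right ⟨_, by rw [← hdg, mul_comm]⟩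
  have hWnat : ∀ i j, (g i j).natDegree ≤ d j := by
    intro i j
    rw [natDegree_le_iff_degree_le]
    refine (degree_add_le _ _).trans (max_le ?_ (hW1 i j).le)
    by_cases hij : i = j
    · subst hij; simp
    · simp [hij]
  have hgco : g.det.coeff (∑ j, d j) = 1 := by
    rw [coeff_det_sum g d hWnat, ← Matrix.det_one (n := Fin n)]
    congr 1
    ext i j
    have h0 : (W i j).coeff (d j) = 0 := coeff_eq_zero_of_degree_lt (hW1 i j)
    by_cases hij : i = j
    · subst hij; simp [hg, h0]
    · simp [hg, hij, h0]
  have hgχ' : g.det = χ := by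
    have hne : g.det ≠ 0 := by intro h0; rw [h0] at hgco; simp at hgco
    have h1 : g.det.natDegree = ∑ j, d j :=
      le_antisymm (natDegree_det_le g d hWnat)
        (le_natDegree_of_ne_zero (by rw [hgco]; exact one_ne_zero))
    have h2 : g.det.Monic := by rw [Monic, leadingCoeff, h1, hgco]
    exact (eq_of_monic_of_dvd_of_natDegree_le h2 hχ hgdvd (by rw [h1, hN])).symm
  have hpψ : (Matrix.of p).det = ψ := by
    rw [hgχ', mul_comm] at hdg
    exact mul_left_cancel₀ hχ.ne_zero hdg
  have hdle : ∀ j, d j ≤ κ + 1 := by intro j; simp only [hd, dd]; split_ifs <;> omega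
  have hle : ∀ i j, (g i j).natDegree ≤ d i := by
    intro i j
    by_cases hi : (i : ℕ) < k
    · refine (hWnat i j).trans ((hdle j).trans ?_)
      simp [hd, dd, hi]
    · have hdi : d i = κ := by simp [hd, dd, hi]
      rw [natDegree_le_iff_degree_le]
      refine (degree_add_le _ _).trans (max_le ?_ ?_)
      · by_cases hij : i = j
        · subst hij; simp
        · simp [hij]
      · rw [← natDegree_le_iff_degree_le, natDegree_le_iff_coeff_eq_zero]
        intro m hm
        refine coeff_eq_zero_of_degree_lt ((hW1 i j).trans_le ?_)
        have := hdle j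
        exact_mod_cast (by omega : d j ≤ m)
  set F : Matrix (Fin n) (Fin n) ℝ[X] := Matrix.of fun i j => (g i j).reflect (d i) with hF
  refine ⟨Matrix.of p, F, ?_, ?_, ?_, ?_⟩
  · intro z hz h0
    rw [det_evalMat, hpψ] at h0
    exact (hs.outside z h0).not_ge hz
  · intro w hw
    by_cases hw0 : w = 0
    · subst hw0
      have h1 : (evalMat F 0) = (Matrix.of fun i j => ((g i j).coeff (d i) : ℂ)) := by
        ext i j
        simp only [evalMat, Matrix.map_apply, hF, Matrix.of_apply]
        rw [← coeff_zero_eq_aeval_zero', coeff_reflect, revAt_le (Nat.zero_le _)]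
        rfl
      rw [h1, Matrix.det_of_isLowerTriangular]
      · refine Finset.prod_ne_zero_iff.mpr fun i _ => ?_
        have h0 : (W i i).coeff (d i) = 0 := coeff_eq_zero_of_degree_lt (hW1 i i)
        simp [hg, h0]
      · intro i j hij
        have hij' : i < j := hij
        simp only [Matrix.of_apply]
        have hne : i ≠ j := hij'.ne
        have h0 : (W i j).coeff (d i) = 0 := by
          refine coeff_eq_zero_of_degree_lt ((hW1 i j).trans_le ?_)
          have : d j ≤ d i := by
            have : (i : ℕ) < j := hij'
            simp only [hd, dd]; split_ifs <;> omega
          exact_mod_cast this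
        simp [hg, hne, h0]
    · have h1 : evalMat F w = Matrix.diagonal (fun i => w ^ d i) * evalMat g w⁻¹ := by
        ext i j
        rw [Matrix.diagonal_mul]
        simp only [evalMat, Matrix.map_apply, hF, Matrix.of_apply]
        rw [← aeval_reflect (inv_ne_zero hw0) (hle i j), inv_inv, inv_pow]
        field_simp
      rw [h1, Matrix.det_mul, Matrix.det_diagonal, det_evalMat, hgχ']
      refine mul_ne_zero (Finset.prod_ne_zero_iff.mpr fun i _ => pow_ne_zero _ hw0) fun h0 => ?_
      have := hs.inside _ h0
      rw [norm_inv] at this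
      have h3 : 0 < ‖w‖ := norm_pos_iff.mpr hw0
      exact this.not_ge ((one_le_inv₀ h3).mpr hw)
  · intro i j hij
    have : (i : ℕ) ≤ j := hij
    simp only [idx]; split_ifs <;> omega
  · have hx : (RatFunc.X : RatFunc ℝ) ≠ 0 := RatFunc.X_ne_zero
    have h1 : polyToRat g = sMat n (idx n κ k) * invSub F := by
      ext i j
      rw [sMat, Matrix.diagonal_mul]
      simp only [polyToRat, invSub, Matrix.map_apply, hF, Matrix.of_apply]
      have h2 := aeval_reflect (K := RatFunc ℝ) hx (hle i j)
      have h3 : idx n κ k i = ((d i : ℕ) : ℤ) := by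
        simp only [idx, hd, dd]; split_ifs <;> simp
      rw [h3, zpow_natCast, mul_comm, h2, RatFunc.aeval_X_left_eq_algebraMap]
    rw [Matrix.mul_assoc, ← h1, hbp]
    simp only [polyToRat]
    rw [Matrix.map_mul]

/-! ### Local continuity of the factorisation -/

/-- The monic polynomial of degree `N` with given lower coefficients. -/
noncomputable def mon {N : ℕ} (a : Fin N → ℝ) : ℝ[X] := X ^ N + ofFn N a

lemma mon_monic {N : ℕ} (a : Fin N → ℝ) : (mon a).Monic := monic_X_pow_add (ofFn_degree_lt a)

lemma mon_natDegree {N : ℕ} (a : Fin N → ℝ) : (mon a).natDegree = N := by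
  rw [mon, natDegree_add_eq_left_of_degree_lt (by simpa using ofFn_degree_lt a), natDegree_X_pow]

lemma mon_toFn {N : ℕ} {χ : ℝ[X]} (hχ : χ.Monic) (hN : χ.natDegree = N) :
    mon (toFn N χ) = χ := by
  ext m
  rw [mon, coeff_add, coeff_X_pow]
  rcases lt_trichotomy m N with h | h | h
  · rw [ofFn_coeff_eq_val_of_lt _ h, if_neg h.ne, zero_add]; rfl
  · rw [ofFn_coeff_eq_zero_of_ge _ h.ge, if_pos h, add_zero, h, ← hN]
    exact hχ.symm
  · rw [ofFn_coeff_eq_zero_of_ge _ h.le, if_neg h.ne', add_zero, coeff_eq_zero_of_natDegree_lt]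
    omega

lemma CC.mon {Θ : Type*} [TopologicalSpace Θ] {N : ℕ} {f : Θ → (Fin N → ℝ)} (hf : Continuous f) :
    CC (fun θ => mon (f θ)) := (CC.const _).add (CC.ofFn hf)

lemma ofFn_natDegree_le' {m : ℕ} (v : Fin (m + 1) → ℝ) : (ofFn (m + 1) v).natDegree ≤ m :=
  Nat.lt_succ_iff.mp (ofFn_natDegree_lt (by omega) v)

lemma local_factor {N m : ℕ} {χ ψ : ℝ[X]} (hχ : χ.Monic) (hN : χ.natDegree = N)
    (hψ : ψ.natDegree ≤ m) (hco : IsCoprime χ ψ)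
    {Pr : (Fin N → ℝ) × (Fin (m + 1) → ℝ) → Prop}
    (hPr : ∀ᶠ x in nhds (toFn N χ, toFn (m + 1) ψ), Pr x) :
    ∀ᶠ e in nhds (toFn (N + m + 1) (χ * ψ)), ∃ x, Pr x ∧
      toFn (N + m + 1) (mon x.1 * ofFn (m + 1) x.2) = e := by
  let B : (Fin N → ℝ) →ₗ[ℝ] (Fin (m + 1) → ℝ) →ₗ[ℝ] (Fin (N + m + 1) → ℝ) :=
    ((LinearMap.mul ℝ ℝ[X]).compl₁₂ (ofFn N) (ofFn (m + 1))).compr₂ (toFn (N + m + 1))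
  let Bc := B.toContinuousBilinearMap
  let L : (Fin (m + 1) → ℝ) →ₗ[ℝ] (Fin (N + m + 1) → ℝ) :=
    toFn (N + m + 1) ∘ₗ LinearMap.mulLeft ℝ (X ^ N) ∘ₗ ofFn (m + 1)
  let Lc := LinearMap.toContinuousLinearMap L
  have hB : ∀ a b, Bc a b = toFn (N + m + 1) (ofFn N a * ofFn (m + 1) b) := fun a b => rfl
  have hL : ∀ b, Lc b = toFn (N + m + 1) (X ^ N * ofFn (m + 1) b) := fun b => rfl
  set x₀ : (Fin N → ℝ) × (Fin (m + 1) → ℝ) := (toFn N χ, toFn (m + 1) ψ) with hx₀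
  have hψ' : ψ.degree < (m + 1 : ℕ) := by
    rw [degree_lt_iff_coeff_zero]
    intro l hl
    exact coeff_eq_zero_of_natDegree_lt (by omega)
  have e1 : mon x₀.1 = χ := mon_toFn hχ hN
  have e2 : ofFn (m + 1) x₀.2 = ψ := ofFn_toFn hψ'
  let Φ : (Fin N → ℝ) × (Fin (m + 1) → ℝ) → (Fin (N + m + 1) → ℝ) := fun x =>
    Lc x.2 + Bc x.1 x.2
  have hΦ : ∀ x, Φ x = toFn (N + m + 1) (mon x.1 * ofFn (m + 1) x.2) := by
    intro x
    simp only [Φ, hB, hL, mon, add_mul, map_add]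
  have hder := (Lc.hasStrictFDerivAt.comp x₀ (hasStrictFDerivAt_snd (p := x₀))).add
    (Bc.hasStrictFDerivAt_of_bilinear (hasStrictFDerivAt_fst (𝕜 := ℝ) (p := x₀))
      (hasStrictFDerivAt_snd (p := x₀)))
  have hder2 : HasStrictFDerivAt Φ _ x₀ := hder
  have hmap := hder2.map_nhds_eq_of_surj (by
    rw [LinearMap.range_eq_top]
    intro e
    obtain ⟨u, v, huv⟩ := hco
    set h := ofFn (N + m + 1) e with hh
    set r := (h * v) %ₘ χ with hr
    have hrdeg : r.degree < N := degree_mod_lt hχ hN _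
    have hdv : χ ∣ h - r * ψ := by
      have h1 : h * v = r + χ * ((h * v) /ₘ χ) := (modByMonic_add_div _ χ).symm
      refine ⟨h * u + (h * v) /ₘ χ * ψ, ?_⟩
      linear_combination (-h) * huv + (ψ) * h1
    obtain ⟨s, hs⟩ := hdv
    have hsdeg : s.degree < (m + 1 : ℕ) := by
      by_cases hs0 : s = 0
      · rw [hs0, degree_zero]; exact WithBot.bot_lt_coe _
      have hlt : (h - r * ψ).degree < (N + m + 1 : ℕ) := by
        refine (degree_sub_le _ _).trans_lt (max_lt (ofFn_degree_lt _) ?_)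
        by_cases hr0 : r = 0
        · rw [hr0, zero_mul, degree_zero]; exact WithBot.bot_lt_coe _
        by_cases hψ0 : ψ = 0
        · rw [hψ0, mul_zero, degree_zero]; exact WithBot.bot_lt_coe _
        rw [degree_mul, degree_eq_natDegree hr0, degree_eq_natDegree hψ0]
        rw [degree_eq_natDegree hr0] at hrdeg
        have : r.natDegree < N := by exact_mod_cast hrdeg
        exact_mod_cast (by omega : r.natDegree + ψ.natDegree < N + m + 1)
      rw [hs, degree_mul, degree_eq_natDegree hχ.ne_zero, degree_eq_natDegree hs0, hN] at hlt
      rw [degree_eq_natDegree hs0]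
      have : N + s.natDegree < N + m + 1 := by exact_mod_cast hlt
      exact_mod_cast (by omega : s.natDegree < m + 1)
    refine ⟨(toFn N r, toFn (m + 1) s), ?_⟩
    have hgoal : Lc (toFn (m + 1) s) + (Bc x₀.1 (toFn (m + 1) s) + Bc (toFn N r) x₀.2) = e := by
      rw [hB, hB, hL, ofFn_toFn hsdeg, ofFn_toFn hrdeg, e2, ← map_add, ← map_add]
      have : X ^ N * s + (ofFn N x₀.1 * s + r * ψ) = h := by
        have : χ * s = X ^ N * s + ofFn N x₀.1 * s := by
          rw [← e1, mon, add_mul]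
        linear_combination -this - hs
      rw [this, hh, toFn_comp_ofFn_eq_id]
    simpa using hgoal)
  have hΦ0 : Φ x₀ = toFn (N + m + 1) (χ * ψ) := by rw [hΦ, e1, e2]
  rw [hΦ0] at hmap
  rw [← hmap, Filter.eventually_map]
  filter_upwards [hPr] with x hx
  exact ⟨x, hx, (hΦ x).symm⟩

lemma split_eventually {N m : ℕ} (x₀ : (Fin N → ℝ) × (Fin (m + 1) → ℝ))
    (h : Split (mon x₀.1) (ofFn (m + 1) x₀.2)) :
    ∀ᶠ x : (Fin N → ℝ) × (Fin (m + 1) → ℝ) in nhds x₀,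
      Split (mon x.1) (ofFn (m + 1) x.2) := by
  have hK := isCompact_closedBall (0 : ℂ) 1
  have h1 := eventually_ne_zero_on_compact hK (θ₀ := x₀)
    (CC.aeval (D := m + 1) (CC.ofFn (N := m + 1)
      (continuous_snd : Continuous fun x : (Fin N → ℝ) × (Fin (m + 1) → ℝ) => x.2))
      (fun x => ofFn_natDegree_lt (by omega) _)) (by
        intro z hz h0
        have := h.outside z h0
        rw [mem_closedBall_zero_iff] at hz
        exact this.not_ge hz)
  have h2 := eventually_ne_zero_on_compact hK (θ₀ := x₀)
    (CC.aeval (D := N + 1) ((CC.mon (N := N)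
      (continuous_fst : Continuous fun x : (Fin N → ℝ) × (Fin (m + 1) → ℝ) => x.1)).reflect N)
      (fun x => by
        have := natDegree_reflect_le (N := N) (p := mon x.1)
        rw [mon_natDegree, max_self] at this
        omega)) (by
        intro z hz h0
        simp only at h0
        rw [mem_closedBall_zero_iff] at hz
        by_cases hz0 : z = 0
        · subst hz0
          rw [← coeff_zero_eq_aeval_zero', coeff_reflect, revAt_le (Nat.zero_le _)] at h0
          have h3 := (mon_monic x₀.1).coeff_natDegree
          rw [mon_natDegree] at h3
          simp [h3] at h0
        · have h3 := aeval_reflect (inv_ne_zero hz0) (mon_natDegree x₀.1).le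
          rw [inv_inv, h0, zero_mul] at h3
          have := h.inside _ h3.symm
          rw [norm_inv] at this
          exact this.not_ge ((one_le_inv₀ (norm_pos_iff.mpr hz0)).mpr hz))
  filter_upwards [h1, h2] with x hx1 hx2
  refine ⟨mon_monic _, fun z hz => ?_, fun z hz => ?_⟩
  · by_contra hlt
    rw [not_lt] at hlt
    have hz0 : z ≠ 0 := by rintro rfl; simp at hlt; linarith
    refine hx2 z⁻¹ ?_ ?_
    · rw [mem_closedBall_zero_iff, norm_inv]
      exact inv_le_one_of_one_le₀ hlt
    · have h3 := aeval_reflect hz0 (mon_natDegree x.1).le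
      rw [hz] at h3
      exact (mul_eq_zero.mp h3).resolve_right (pow_ne_zero _ hz0)
  · by_contra hlt
    rw [not_lt] at hlt
    exact hx1 z (by rwa [mem_closedBall_zero_iff]) hz

/-- Local stability of the splitting, with an extra open condition. -/
lemma exists_split_nhds {Θ : Type*} [TopologicalSpace Θ] {f : Θ → ℝ[X]} (hf : CC f) {N m : ℕ}
    (hfd : ∀ θ, (f θ).natDegree ≤ N + m) {χ ψ : ℝ[X]} (hs : Split χ ψ) (hN : χ.natDegree = N)
    {θ₀ : Θ} (h0 : f θ₀ = χ * ψ) (hne : f θ₀ ≠ 0) {Pr : Θ × (Fin N → ℝ) → Prop}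
    (hPr : ∀ᶠ x in nhds (θ₀, toFn N χ), Pr x) :
    ∀ᶠ θ in nhds θ₀, ∃ (a : Fin N → ℝ) (ψ' : ℝ[X]),
      Pr (θ, a) ∧ Split (mon a) ψ' ∧ f θ = mon a * ψ' := by
  have hψ : ψ.natDegree ≤ m := by
    have h1 := hfd θ₀
    rw [h0] at hne h1
    rw [natDegree_mul (left_ne_zero_of_mul hne) (right_ne_zero_of_mul hne), hN] at h1
    omega
  have hψ' : ψ.degree < (m + 1 : ℕ) := by
    rw [degree_lt_iff_coeff_zero]
    intro l hl
    exact coeff_eq_zero_of_natDegree_lt (by omega)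
  rw [nhds_prod_eq, Filter.eventually_prod_iff] at hPr
  obtain ⟨pa, hpa, pb, hpb, hpp⟩ := hPr
  have hsp := split_eventually (toFn N χ, toFn (m + 1) ψ)
    (by simpa only [mon_toFn hs.monic hN, ofFn_toFn hψ'] using hs)
  have hpb' : ∀ᶠ x : (Fin N → ℝ) × (Fin (m + 1) → ℝ) in nhds (toFn N χ, toFn (m + 1) ψ),
      pb x.1 := (continuous_fst.tendsto _).eventually hpb
  have key := local_factor hs.monic hN hψ hs.coprime (hsp.and hpb')
  rw [← h0] at key
  have key2 := ((hf.toFn (N + m + 1)).tendsto θ₀).eventually key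
  filter_upwards [key2, hpa] with θ hθ hpaθ
  obtain ⟨x, ⟨hx1, hx2⟩, hx3⟩ := hθ
  refine ⟨x.1, ofFn (m + 1) x.2, hpp hpaθ hx2, hx1, ?_⟩
  rw [← sub_eq_zero, ← map_sub, toFn_eq_zero] at hx3
  · exact (sub_eq_zero.mp hx3).symm
  · rw [degree_lt_iff_coeff_zero]
    intro l hl
    rw [coeff_sub, coeff_eq_zero_of_natDegree_lt, coeff_eq_zero_of_natDegree_lt, sub_zero]
    · have := hfd θ; omega
    · have := natDegree_mul_le (p := mon x.1) (q := ofFn (m + 1) x.2)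
      rw [mon_natDegree] at this
      have := ofFn_natDegree_le' x.2
      omega

/-- The balancedness condition is open. -/
lemma bal_eventually {Θ : Type*} [TopologicalSpace Θ] {n N D : ℕ} (d : Fin n → ℕ)
    (A : Θ → Fin n → ℝ[X]) (hA : ∀ j, CC (fun θ => A θ j)) (hD : ∀ θ j, (A θ j).natDegree ≤ D)
    {θ₀ : Θ} {a₀ : Fin N → ℝ} (h : Bal d (mon a₀) (A θ₀)) :
    ∀ᶠ x : Θ × (Fin N → ℝ) in nhds (θ₀, a₀), Bal d (mon x.2) (A x.1) := by
  set M : ℕ := ∑ j, d j with hM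
  have hdM : ∀ j, d j ≤ M := fun j => Finset.single_le_sum (fun _ _ => Nat.zero_le _)
    (Finset.mem_univ j)
  let G : (Θ × (Fin N → ℝ)) × (((j : Fin n) → Fin (d j) → ℝ) × (Fin (M + D + 1) → ℝ)) → ℝ[X] := fun x =>
    (∑ j, ofFn (d j) (x.2.1 j) * A x.1.1 j) + mon x.1.2 * ofFn (M + D + 1) x.2.2
  have hG : CC G := by
    refine CC.add (CC.sum _ fun j _ => CC.mul (CC.ofFn ?_) ?_) (CC.mul (CC.mon ?_) (CC.ofFn ?_))
    · fun_prop
    · exact (hA j).comp (by fun_prop)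
    · fun_prop
    · fun_prop
  have hsumdeg : ∀ (θ : Θ) (v : Fin n → ℝ[X]), (∀ j, (v j).degree < d j) →
      (∑ j, v j * A θ j).natDegree ≤ M + D := by
    intro θ v hv
    refine natDegree_sum_le_of_forall_le _ _ fun j _ => natDegree_mul_le_of_le ?_ (hD θ j)
    refine natDegree_le_iff_degree_le.mpr ((hv j).le.trans ?_)
    exact_mod_cast hdM j
  have hGdeg : ∀ x, (G x).degree < (N + M + D + 1 : ℕ) := by
    intro x
    rw [degree_lt_iff_coeff_zero]
    intro l hl
    refine coeff_eq_zero_of_natDegree_lt ?_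
    refine lt_of_le_of_lt (natDegree_add_le_of_degree_le (n := N + M + D) ?_ ?_) (by omega)
    · exact (hsumdeg _ _ fun j => ofFn_degree_lt _).trans (by omega)
    · refine (natDegree_mul_le_of_le (mon_natDegree _).le (ofFn_natDegree_le' _)).trans (by omega)
  have hcont : Continuous fun x => toFn (N + M + D + 1) (G x) := hG.toFn _
  have hK : IsCompact (Metric.sphere (0 : (((j : Fin n) → Fin (d j) → ℝ) × (Fin (M + D + 1) → ℝ))) 1) := isCompact_sphere _ _
  have hiff : ∀ x : Θ × (Fin N → ℝ), Bal d (mon x.2) (A x.1) ↔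
      ∀ v ∈ Metric.sphere (0 : (((j : Fin n) → Fin (d j) → ℝ) × (Fin (M + D + 1) → ℝ))) 1, toFn (N + M + D + 1) (G (x, v)) ≠ 0 := by
    intro x
    constructor
    · intro hb v hv h0
      rw [toFn_eq_zero (hGdeg _)] at h0
      have h1 : (fun j => ofFn (d j) (v.1 j)) = 0 := by
        refine hb _ (fun j => ofFn_degree_lt _) ⟨-ofFn (M + D + 1) v.2, ?_⟩
        simp only [G] at h0
        linear_combination h0
      have h2 : v.1 = 0 := by
        ext1 j
        exact injective_ofFn _ (by simpa using congrFun h1 j)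
      have h3 : v.2 = 0 := by
        simp only [G, h2, Pi.zero_apply, map_zero, zero_mul, Finset.sum_const_zero, zero_add] at h0
        have := (mul_eq_zero.mp h0).resolve_left (mon_monic _).ne_zero
        exact injective_ofFn _ (by simpa using this)
      have h4 : v = 0 := Prod.ext h2 h3
      rw [h4] at hv
      simp at hv
    · intro hv v hvd ⟨u, hu⟩
      have hu' : (-u).degree < (M + D + 1 : ℕ) := by
        rw [degree_neg]
        by_cases hu0 : u = 0
        · rw [hu0, degree_zero]; exact WithBot.bot_lt_coe _
        have h1 := hsumdeg x.1 v hvd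
        rw [hu, natDegree_mul (mon_monic _).ne_zero hu0] at h1
        rw [degree_eq_natDegree hu0]
        exact_mod_cast (by omega : u.natDegree < M + D + 1)
      let w : (((j : Fin n) → Fin (d j) → ℝ) × (Fin (M + D + 1) → ℝ)) := (fun j => toFn (d j) (v j), toFn (M + D + 1) (-u))
      by_contra hne
      have hw : w ≠ 0 := by
        intro h0
        apply hne
        ext1 j
        have h1 : w.1 j = 0 := by rw [h0]; rfl
        exact (toFn_eq_zero (hvd j)).mp h1
      refine hv (‖w‖⁻¹ • w) ?_ ?_
      · rw [mem_sphere_zero_iff_norm, norm_smul, norm_inv, norm_norm,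
          inv_mul_cancel₀ (norm_ne_zero_iff.mpr hw)]
      · rw [toFn_eq_zero (hGdeg _)]
        have h1 : G (x, ‖w‖⁻¹ • w) = ‖w‖⁻¹ • G (x, w) := by
          simp only [G, Prod.smul_fst, Prod.smul_snd, Pi.smul_apply, map_smul, smul_add,
            Finset.smul_sum, smul_mul_assoc, mul_smul_comm]
        have h2 : G (x, w) = 0 := by
          simp only [G, w, ofFn_toFn (hvd _), ofFn_toFn hu', hu]
          ring
        rw [h1, h2, smul_zero]
  have := eventually_ne_zero_on_compact hK hcont (θ₀ := (θ₀, a₀)) ((hiff (θ₀, a₀)).mp h)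
  filter_upwards [this] with x hx
  exact (hiff x).mpr hx

/-! ### The open set -/

/-- The open dense set of generic coefficient tuples. -/
def InU {n q : ℕ} (c : Fin (q + 1) → Matrix (Fin n) (Fin n) ℝ) : Prop :=
  ∃ (κ k : ℕ) (χ ψ : ℝ[X]) (y : Fin n → ℝ[X]),
    ((κ < q ∧ k < n) ∨ (κ = q ∧ k = 0)) ∧ Split χ ψ ∧ χ.natDegree = ∑ j, dd n κ k j ∧
    (polyOf c).det = χ * ψ ∧ (∀ j, (y j).natDegree ≤ 0) ∧
    Bal (dd n κ k) χ ((polyOf c).adjugate *ᵥ y)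

lemma Split.ne_zero {χ ψ : ℝ[X]} (h : Split χ ψ) : χ * ψ ≠ 0 := by
  refine mul_ne_zero h.monic.ne_zero ?_
  rintro rfl
  have := h.outside 0 (by simp)
  simp at this
  linarith

lemma Split.ne_zero_on_circle {χ ψ : ℝ[X]} (h : Split χ ψ) {z : ℂ} (hz : ‖z‖ = 1) :
    aeval z (χ * ψ) ≠ 0 := by
  rw [map_mul]
  refine mul_ne_zero (fun h0 => ?_) (fun h0 => ?_)
  · exact (h.inside z h0).ne hz
  · exact (h.outside z h0).ne' hz

lemma cc_adj {n q : ℕ} (y : Fin n → ℝ[X]) (j : Fin n) :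
    CC (fun c : Fin (q + 1) → Matrix (Fin n) (Fin n) ℝ => ((polyOf c).adjugate *ᵥ y) j) := by
  simp only [Matrix.mulVec, dotProduct]
  exact CC.sum _ fun i _ => (CC.adjugate polyOf_cc _ _).mul (CC.const _)

lemma natDegree_adj {n q : ℕ} {y : Fin n → ℝ[X]} (hy : ∀ j, (y j).natDegree ≤ 0)
    (c : Fin (q + 1) → Matrix (Fin n) (Fin n) ℝ) (j : Fin n) :
    (((polyOf c).adjugate *ᵥ y) j).natDegree ≤ n * q := by
  simp only [Matrix.mulVec, dotProduct]
  refine natDegree_sum_le_of_forall_le _ _ fun i _ => ?_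
  exact natDegree_mul_le_of_le (natDegree_adjugate_le _ q (polyOf_natDegree c) _ _) (hy i)

lemma isOpen_InU {n q : ℕ} :
    IsOpen {c : Fin (q + 1) → Matrix (Fin n) (Fin n) ℝ | InU c} := by
  rw [isOpen_iff_mem_nhds]
  rintro c₀ ⟨κ, k, χ, ψ, y, hk, hs, hN, hdet, hy, hbal⟩
  obtain ⟨m, hm⟩ : ∃ m, n * q = χ.natDegree + m := by
    have h1 := natDegree_det_polyOf c₀
    have h2 := hs.ne_zero
    rw [hdet, natDegree_mul (left_ne_zero_of_mul h2) (right_ne_zero_of_mul h2)] at h1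
    exact ⟨n * q - χ.natDegree, by omega⟩
  have hb := bal_eventually (N := χ.natDegree) (dd n κ k)
    (fun c : Fin (q + 1) → Matrix (Fin n) (Fin n) ℝ => (polyOf c).adjugate *ᵥ y)
    (fun j => cc_adj y j) (fun c j => natDegree_adj hy c j) (θ₀ := c₀)
    (a₀ := toFn χ.natDegree χ) (by rwa [mon_toFn hs.monic rfl])
  have := exists_split_nhds (CC.det (polyOf_cc (n := n) (q := q)))
    (fun c => (natDegree_det_polyOf c).trans hm.le) hs rfl hdet (by rw [hdet]; exact hs.ne_zero) hb
  filter_upwards [this] with c hc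
  obtain ⟨a, ψ', h1, h2, h3⟩ := hc
  exact ⟨κ, k, mon a, ψ', y, hk, h2, by rw [mon_natDegree, hN], h3, hy, h1⟩

/-! ### Splitting of a real polynomial -/

lemma irreducible_roots_norm {p : ℝ[X]} (hp : Irreducible p) {z w : ℂ} (hz : aeval z p = 0)
    (hw : aeval w p = 0) : ‖w‖ = ‖z‖ := by
  set Q : ℝ[X] := X ^ 2 - C (2 * z.re) * X + C (Complex.normSq z) with hQ
  have hev : ∀ u : ℂ, aeval u Q = (u - z) * (u - (starRingEnd ℂ) z) := by
    intro u
    have h1 : (z : ℂ) + (starRingEnd ℂ) z = ((2 * z.re : ℝ) : ℂ) := Complex.add_conj z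
    have h2 : (z : ℂ) * (starRingEnd ℂ) z = (Complex.normSq z : ℂ) := Complex.mul_conj z
    simp only [hQ, map_add, map_sub, map_mul, map_pow, aeval_X, aeval_C, Complex.coe_algebraMap]
    push_cast at h1 ⊢
    linear_combination u * h1 - h2
  have hdvd : p ∣ Q := by
    have h1 := minpoly.dvd ℝ z hz
    have h2 := minpoly.dvd ℝ z (p := Q) (by rw [hev]; simp)
    have h3 : ¬ IsUnit (minpoly ℝ z) := minpoly.not_isUnit ℝ z
    obtain ⟨r, hr⟩ := h1
    have := (hp.isUnit_or_isUnit hr).resolve_left h3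
    rw [hr]
    exact (this.mul_right_dvd).mpr h2
  obtain ⟨r, hr⟩ := hdvd
  have h0 : aeval w Q = 0 := by rw [hr, map_mul, hw, zero_mul]
  rw [hev] at h0
  rcases mul_eq_zero.mp h0 with h | h
  · rw [sub_eq_zero.mp h]
  · rw [sub_eq_zero.mp h, Complex.norm_conj]

lemma exists_split (d : ℝ[X]) : d ≠ 0 → (∀ z : ℂ, ‖z‖ = 1 → aeval z d ≠ 0) →
    ∃ χ ψ, Split χ ψ ∧ d = χ * ψ := by
  refine UniqueFactorizationMonoid.induction_on_prime d ?_ ?_ ?_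
  · intro h; exact absurd rfl h
  · intro x hx _ _
    refine ⟨1, x, ⟨monic_one, fun z hz => by simp at hz, fun z hz => ?_⟩, by simp⟩
    have := hx.map (aeval z : ℝ[X] →ₐ[ℝ] ℂ)
    rw [hz] at this
    simp at this
  · intro a p ha hp ih _ hpa
    obtain ⟨χ, ψ, hs, rfl⟩ := ih ha fun z hz h0 => hpa z hz (by rw [map_mul, h0, mul_zero])
    have hirr := hp.irreducible
    by_cases hz : ∃ z : ℂ, aeval z p = 0 ∧ ‖z‖ < 1
    · obtain ⟨z, hz0, hz1⟩ := hz
      have hlc : p.leadingCoeff ≠ 0 := leadingCoeff_ne_zero.mpr hp.ne_zero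
      refine ⟨(p * C p.leadingCoeff⁻¹) * χ, C p.leadingCoeff * ψ, ⟨?_, ?_, ?_⟩, ?_⟩
      · exact (monic_mul_leadingCoeff_inv hp.ne_zero).mul hs.monic
      · intro w hw
        rw [map_mul, map_mul] at hw
        rcases mul_eq_zero.mp hw with h | h
        · rcases mul_eq_zero.mp h with h | h
          · rw [irreducible_roots_norm hirr hz0 h]; exact hz1
          · simp [hp.ne_zero] at h
        · exact hs.inside w h
      · intro w hw
        rw [map_mul] at hw
        rcases mul_eq_zero.mp hw with h | h
        · simp [hp.ne_zero] at h
        · exact hs.outside w h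
      · have : C p.leadingCoeff⁻¹ * C p.leadingCoeff = 1 := by
          rw [← C_mul, inv_mul_cancel₀ hlc, C_1]
        linear_combination (-p * χ * ψ) * this
    · push Not at hz
      refine ⟨χ, p * ψ, ⟨hs.monic, hs.inside, ?_⟩, by ring⟩
      intro w hw
      rw [map_mul] at hw
      rcases mul_eq_zero.mp hw with h | h
      · refine lt_of_le_of_ne (hz w h) fun h1 => hpa w h1.symm ?_
        rw [map_mul, h, zero_mul]
      · exact hs.outside w h

/-! ### Generic tuples have separable determinant -/

lemma polyOf_add {n q : ℕ} (c e : Fin (q + 1) → Matrix (Fin n) (Fin n) ℝ) :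
    polyOf (c + e) = polyOf c + polyOf e := by
  ext i j m
  rw [Matrix.add_apply, coeff_add, polyOf_coeff, polyOf_coeff, polyOf_coeff]
  split_ifs <;> simp

lemma polyOf_smul {n q : ℕ} (t : ℝ) (c : Fin (q + 1) → Matrix (Fin n) (Fin n) ℝ) (i j : Fin n) :
    polyOf (t • c) i j = C t * polyOf c i j := by
  ext m
  rw [coeff_C_mul, polyOf_coeff, polyOf_coeff]
  split_ifs <;> simp

lemma exists_model (n q : ℕ) : ∃ c : Fin (q + 1) → Matrix (Fin n) (Fin n) ℝ,
    (polyOf c).det.Separable ∧ (polyOf c).det.coeff (n * q) = 1 := by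
  let r : Fin n × Fin q → ℝ := fun x => (finProdFinEquiv x : ℕ)
  have hr : Function.Injective r := by
    intro x y hxy
    have h0 : ((finProdFinEquiv x : ℕ) : ℝ) = ((finProdFinEquiv y : ℕ) : ℝ) := hxy
    have h1 : (finProdFinEquiv x : ℕ) = finProdFinEquiv y := by exact_mod_cast h0
    exact finProdFinEquiv.injective (Fin.ext h1)
  let M : Matrix (Fin n) (Fin n) ℝ[X] := Matrix.diagonal fun i => ∏ l, (X - C (r (i, l)))
  have hM : polyOf (tupleOf q M) = M := by
    refine polyOf_tupleOf M fun i j => ?_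
    by_cases hij : i = j
    · subst hij
      simp only [M, Matrix.diagonal_apply_eq]
      rw [natDegree_finsetProd_X_sub_C_eq_card]
      simp
    · simp [M, hij]
  have hdet : M.det = ∏ x, (X - C (r x)) := by
    rw [Matrix.det_diagonal, Fintype.prod_prod_type]
  refine ⟨tupleOf q M, ?_, ?_⟩
  · rw [hM, hdet]
    exact separable_prod_X_sub_C_iff.mpr hr
  · rw [hM, hdet]
    have h1 : (∏ x, (X - C (r x))).Monic := monic_prod_of_monic _ _ fun i _ => monic_X_sub_C _
    have h2 := h1.coeff_natDegree
    rw [natDegree_finsetProd_X_sub_C_eq_card] at h2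
    simpa using h2

lemma generic_separable {n q : ℕ} (c₀ : Fin (q + 1) → Matrix (Fin n) (Fin n) ℝ) :
    ∃ᶠ c in nhds c₀, (polyOf c).det.Separable ∧ (polyOf c).det.coeff (n * q) ≠ 0 := by
  obtain ⟨e, he1, he2⟩ := exists_model n q
  set D := n * q with hD
  let B : Matrix (Fin n) (Fin n) ℝ[X][X] := Matrix.of fun i j =>
    (polyOf c₀ i j).map C + C X * (polyOf (e - c₀) i j).map C
  have hB : ∀ t : ℝ, B.det.map (evalRingHom t) = (polyOf (c₀ + t • (e - c₀))).det := by
    intro t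
    rw [← coe_mapRingHom, RingHom.map_det]
    congr 1
    ext1 i j
    rw [polyOf_add, Matrix.add_apply, polyOf_smul, RingHom.mapMatrix_apply, Matrix.map_apply,
      coe_mapRingHom]
    simp only [B, Matrix.of_apply, Polynomial.map_add, Polynomial.map_mul, Polynomial.map_map,
      map_C]
    have : (evalRingHom t).comp (C : ℝ →+* ℝ[X]) = RingHom.id ℝ := by ext x; simp
    rw [this]
    simp
  let Q : ℝ[X] := resultant B.det (derivative B.det) D (D - 1) * B.det.coeff D
  have hQ : ∀ t, eval t Q = resultant (polyOf (c₀ + t • (e - c₀))).det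
      (derivative (polyOf (c₀ + t • (e - c₀))).det) D (D - 1) *
      (polyOf (c₀ + t • (e - c₀))).det.coeff D := by
    intro t
    rw [← hB, derivative_map, resultant_map_map, coeff_map]
    simp [Q]
  have hcrit : ∀ f : ℝ[X], f.natDegree ≤ D → (resultant f (derivative f) D (D - 1) * f.coeff D ≠ 0 ↔
      f.Separable ∧ f.coeff D ≠ 0) := by
    intro f hf
    rw [mul_ne_zero_iff]
    refine and_congr_left fun h => ?_
    have h1 : f.natDegree = D := le_antisymm hf (le_natDegree_of_ne_zero h)
    have hf0 : f ≠ 0 := by rintro rfl; simp at h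
    have h2 : (derivative f).natDegree = D - 1 := by rw [natDegree_derivative, h1]
    have h3 := resultant_eq_zero_iff (f := f) (g := derivative f)
    rw [h1, h2] at h3
    rw [Ne, h3]
    simp [hf0, Separable]
  have hQ1 : Q ≠ 0 := by
    intro h0
    have h1 := hQ 1
    rw [h0, eval_zero] at h1
    have h2 : c₀ + (1 : ℝ) • (e - c₀) = e := by rw [one_smul]; abel
    rw [h2] at h1
    exact (hcrit _ (natDegree_det_polyOf e)).mpr ⟨he1, by rw [he2]; exact one_ne_zero⟩ h1.symm
  have hev : ∀ᶠ t in nhdsWithin (0 : ℝ) {0}ᶜ, eval t Q ≠ 0 := by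
    have hfin : (↑Q.roots.toFinset : Set ℝ).Finite := Finset.finite_toSet _
    have h2 := (hfin.subset (Set.sdiff_subset (t := {0}))).isClosed.isOpen_compl.mem_nhds
      (show (0 : ℝ) ∈ ((↑Q.roots.toFinset : Set ℝ) \ {0})ᶜ by simp)
    filter_upwards [mem_nhdsWithin_of_mem_nhds h2, self_mem_nhdsWithin] with t ht ht0 h0
    apply ht
    refine ⟨?_, ht0⟩
    simp [hQ1, h0]
  have htend : Filter.Tendsto (fun t : ℝ => c₀ + t • (e - c₀)) (nhdsWithin (0 : ℝ) {0}ᶜ)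
      (nhds c₀) := by
    have : Continuous fun t : ℝ => c₀ + t • (e - c₀) := by fun_prop
    have h2 := this.tendsto 0
    simp only [zero_smul, add_zero] at h2
    exact h2.mono_left nhdsWithin_le_nhds
  refine htend.frequently (Filter.Eventually.frequently ?_)
  filter_upwards [hev] with t ht
  rw [hQ] at ht
  exact (hcrit _ (natDegree_det_polyOf _)).mp ht

/-! ### Density: linear algebra preliminaries -/

lemma adj_ne_zero_of_separable {n : ℕ} (hn : 0 < n) (b : Matrix (Fin n) (Fin n) ℝ[X])
    (hsep : b.det.Separable) (z : ℂ) : ∃ i j, aeval z (b.adjugate i j) ≠ 0 := by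
  by_contra! hcon
  let φ : ℝ[X] →+* ℂ[X] := mapRingHom (algebraMap ℝ ℂ)
  let B : Matrix (Fin n) (Fin n) ℂ[X] := φ.mapMatrix b
  have hadj : ∀ i j, (X - C z) ∣ B.adjugate i j := by
    intro i j
    have h1 : B.adjugate = φ.mapMatrix b.adjugate := (RingHom.map_adjugate φ b).symm
    rw [h1, dvd_iff_isRoot, IsRoot.def]
    have := hcon i j
    rw [aeval_def, ← eval_map] at this
    exact this
  choose A hA using hadj
  have hdetB : B.det = φ b.det := (RingHom.map_det φ b).symm
  have hsB : B.det.Separable := by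
    rw [hdetB]; exact hsep.map
  have h1 : ∀ i j, (B * B.adjugate) i j = (X - C z) * (B * Matrix.of A) i j := by
    intro i j
    simp only [Matrix.mul_apply, hA, Finset.mul_sum, Matrix.of_apply]
    exact Finset.sum_congr rfl fun _ _ => by ring
  have hX : (X - C z : ℂ[X]) ≠ 0 := X_sub_C_ne_zero z
  obtain ⟨e, he⟩ : (X - C z) ∣ B.det := by
    have := h1 ⟨0, hn⟩ ⟨0, hn⟩
    rw [Matrix.mul_adjugate] at this
    simp only [Matrix.smul_apply, Matrix.one_apply_eq, smul_eq_mul, mul_one] at this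
    exact ⟨_, this⟩
  have h2 : B * Matrix.of A = e • (1 : Matrix (Fin n) (Fin n) ℂ[X]) := by
    ext1 i j
    apply mul_left_cancel₀ hX
    rw [← h1, Matrix.mul_adjugate, he]
    simp [mul_assoc]
  have h3 : B.det * (Matrix.of A).det = e ^ n := by
    rw [← Matrix.det_mul, h2, Matrix.det_smul]; simp
  have h4 : (X - C z) ∣ e := by
    have : (X - C z) ∣ e ^ n := by
      rw [← h3, he, mul_assoc]; exact dvd_mul_right _ _
    exact (prime_X_sub_C z).dvd_of_dvd_pow this
  have h5 : IsUnit (X - C z) := by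
    apply hsB.squarefree
    rw [he]
    exact mul_dvd_mul_left _ h4
  exact not_isUnit_X_sub_C z h5

lemma exists_generic_vector {n : ℕ} (S : Finset ℂ) (A : ℂ → Matrix (Fin n) (Fin n) ℂ)
    (h : ∀ z ∈ S, ∃ i j, A z i j ≠ 0) :
    ∃ y : Fin n → ℝ, ∀ z ∈ S, A z *ᵥ (fun j => (y j : ℂ)) ≠ 0 := by
  let L : ℂ → (Fin n → ℝ) →ₗ[ℝ] (Fin n → ℂ) := fun z =>
    { toFun := fun y => A z *ᵥ (fun j => (y j : ℂ))
      map_add' := fun x y => by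
        rw [← Matrix.mulVec_add]; congr 1; ext j; simp
      map_smul' := fun t x => by
        ext i
        simp only [Matrix.mulVec, dotProduct, Pi.smul_apply, smul_eq_mul, RingHom.id_apply,
          Finset.smul_sum, Complex.real_smul]
        refine Finset.sum_congr rfl fun j _ => ?_
        push_cast; ring }
  have hne := Subspace.biUnion_ne_univ_of_top_notMem (k := ℝ) (E := Fin n → ℝ)
    (s := S.image fun z => LinearMap.ker (L z)) (by
      intro hmem
      obtain ⟨z, hz, hk⟩ := Finset.mem_image.mp hmem
      obtain ⟨i, j, hij⟩ := h z hz
      apply hij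
      have h1 : L z (Pi.single j 1) = 0 := by
        rw [← LinearMap.mem_ker, hk]; trivial
      have h2 := congrFun h1 i
      simp only [L, LinearMap.coe_mk, AddHom.coe_mk, Matrix.mulVec, dotProduct, Pi.zero_apply] at h2
      rw [Finset.sum_eq_single j] at h2
      · simpa using h2
      · intro l _ hl; simp [hl]
      · simp)
  obtain ⟨y, hy⟩ := (Set.ne_univ_iff_exists_notMem _).mp hne
  refine ⟨y, fun z hz h0 => hy ?_⟩
  simp only [Set.mem_iUnion]
  exact ⟨LinearMap.ker (L z), Finset.mem_image_of_mem _ hz, h0⟩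

lemma exists_bezout {n : ℕ} {χ : ℝ[X]} (hχ : χ ≠ 0) (a : Fin n → ℝ[X])
    (h : ∀ z : ℂ, aeval z χ = 0 → ∃ j, aeval z (a j) ≠ 0) :
    ∃ w : Fin n → ℝ[X], χ ∣ 1 - ∑ j, w j * a j := by
  have htop : Ideal.span {χ} ⊔ Ideal.span (Set.range a) = ⊤ := by
    obtain ⟨g, hg⟩ := IsPrincipalIdealRing.principal (Ideal.span {χ} ⊔ Ideal.span (Set.range a))
    have hg' : Ideal.span {χ} ⊔ Ideal.span (Set.range a) = Ideal.span {g} := hg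
    have h1 : g ∣ χ := by
      rw [← Ideal.mem_span_singleton, ← hg']
      exact Ideal.mem_sup_left (Ideal.mem_span_singleton_self χ)
    have h2 : ∀ j, g ∣ a j := fun j => by
      rw [← Ideal.mem_span_singleton, ← hg']
      exact Ideal.mem_sup_right (Ideal.subset_span ⟨j, rfl⟩)
    rw [hg', Ideal.span_singleton_eq_top]
    by_contra hu
    have hdeg : (g.map (algebraMap ℝ ℂ)).degree ≠ 0 := by
      rw [degree_map]
      intro hd
      exact hu (isUnit_iff_degree_eq_zero.mpr hd)
    obtain ⟨z, hz⟩ := IsAlgClosed.exists_root _ hdeg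
    have hz' : aeval z g = 0 := by rw [aeval_def, ← eval_map]; exact hz
    obtain ⟨j, hj⟩ := h z (by obtain ⟨r, rfl⟩ := h1; simp [hz'])
    apply hj
    obtain ⟨r, hr⟩ := h2 j
    rw [hr, map_mul, hz', zero_mul]
  have h1 : (1 : ℝ[X]) ∈ Ideal.span {χ} ⊔ Ideal.span (Set.range a) := by rw [htop]; trivial
  obtain ⟨u, hu, v, hv, huv⟩ := Submodule.mem_sup.mp h1
  obtain ⟨w, hw⟩ := Ideal.mem_span_range_iff_exists_fun.mp hv
  refine ⟨w, ?_⟩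
  rw [hw, ← huv, add_sub_cancel_right]
  exact Ideal.mem_span_singleton.mp hu

lemma row_surj {n q : ℕ} (c : Fin (q + 1) → Matrix (Fin n) (Fin n) ℝ) {χ : ℝ[X]} (hχ : χ ≠ 0)
    (hdvd : χ ∣ (polyOf c).det) (hlc : (polyOf c).det.coeff (n * q) ≠ 0) (y : Fin n → ℝ[X])
    (h : ∀ z : ℂ, aeval z χ = 0 → ∃ j, aeval z (((polyOf c).adjugate *ᵥ y) j) ≠ 0) (P : ℝ[X]) :
    ∃ v : Fin n → ℝ[X], (∀ j, (v j).natDegree ≤ q) ∧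
      χ ∣ P - ∑ j, v j * ((polyOf c).adjugate *ᵥ y) j := by
  set b := polyOf c with hb
  set a := b.adjugate *ᵥ y with ha
  obtain ⟨w, hw⟩ := exists_bezout hχ a h
  let Bq : Matrix (Fin n) (Fin n) ℝ := Matrix.of fun i j => (b i j).coeff q
  have hBq : IsUnit Bq.det := by
    have := coeff_det_sum b (fun _ => q) (fun i j => polyOf_natDegree c i j)
    simp only [Finset.sum_const, Finset.card_univ, Fintype.card_fin, smul_eq_mul] at this
    rw [this] at hlc
    exact isUnit_iff_ne_zero.mpr hlc
  let G : Matrix (Fin n) (Fin n) ℝ[X] := (Bq⁻¹).map C * b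
  have hGc : ∀ i j m, (G i j).coeff m = (Bq⁻¹ * Matrix.of fun i j => (b i j).coeff m) i j := by
    intro i j m
    simp [G, Matrix.mul_apply, finsetSum_coeff]
  let W := G - Matrix.diagonal (fun _ => (X : ℝ[X]) ^ q)
  have hW : ∀ i j, (W i j).degree < ((fun _ : Fin n => q) j : ℕ) := by
    intro i j
    rw [degree_lt_iff_coeff_zero]
    intro m hm
    simp only [W, Matrix.sub_apply, coeff_sub, hGc]
    rcases hm.eq_or_lt with rfl | hm
    · have : (Bq⁻¹ * Matrix.of fun i j => (b i j).coeff q) = 1 := Matrix.nonsing_inv_mul Bq hBq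
      rw [this]
      by_cases hij : i = j
      · subst hij; simp
      · simp [hij]
    · have : (Matrix.of fun i j => (b i j).coeff m) = 0 := by
        ext i j
        exact coeff_eq_zero_of_natDegree_lt ((polyOf_natDegree c i j).trans_lt hm)
      rw [this]
      by_cases hij : i = j
      · subst hij; simp [coeff_X_pow, hm.ne']
      · simp [hij]
  obtain ⟨x, r, hr, hx⟩ := exists_division (fun _ => q) W hW (fun j => P * w j)
  refine ⟨r, fun j => natDegree_le_of_degree_le (hr j).le, ?_⟩
  have hg : Matrix.diagonal (fun _ => (X : ℝ[X]) ^ q) + W = G := by simp [W]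
  rw [hg] at hx
  have h1 : (x ᵥ* G) ⬝ᵥ a = b.det * ((x ᵥ* (Bq⁻¹).map C) ⬝ᵥ y) := by
    simp only [G]
    rw [← Matrix.vecMul_vecMul, ← Matrix.dotProduct_mulVec, ha, Matrix.mulVec_mulVec,
      Matrix.mul_adjugate, Matrix.smul_mulVec, Matrix.one_mulVec, dotProduct_smul, smul_eq_mul]
  have h2 : (fun j => P * w j) ⬝ᵥ a = P * ∑ j, w j * a j := by
    simp only [dotProduct, Finset.mul_sum, mul_assoc]
  have h3 : P * ∑ j, w j * a j = b.det * ((x ᵥ* (Bq⁻¹).map C) ⬝ᵥ y) + ∑ j, r j * a j := by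
    rw [← h2, hx, add_dotProduct, h1]; rfl
  have h4 : P - ∑ j, r j * a j = P * (1 - ∑ j, w j * a j) +
      b.det * ((x ᵥ* (Bq⁻¹).map C) ⬝ᵥ y) := by
    linear_combination h3
  rw [h4]
  exact dvd_add (hw.mul_left _) (hdvd.mul_right _)

lemma sum_dd (n κ k : ℕ) (hk : k ≤ n) : ∑ j, dd n κ k j = κ * n + k := by
  have : ∀ j : Fin n, dd n κ k j = κ + if (j : ℕ) < k then 1 else 0 := by
    intro j; simp only [dd]; split_ifs <;> rfl
  simp only [this, Finset.sum_add_distrib]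
  rw [Finset.sum_boole, Fin.card_filter_val_lt]
  simp [mul_comm, hk]

lemma bal_model (n κ k : ℕ) (hk : k ≤ n) {χ : ℝ[X]} (hχ : χ.Monic)
    (hN : χ.natDegree = ∑ j, dd n κ k j) :
    Bal (dd n κ k) χ (fun j => X ^ (κ * j + min (j : ℕ) k)) := by
  intro v hv hdvd
  set o : Fin n → ℕ := fun j => κ * j + min (j : ℕ) k with ho
  have hlt : ∀ i j : Fin n, i < j → o i + dd n κ k i ≤ o j := by
    intro i j hij
    have h1 : (i : ℕ) + 1 ≤ j := hij
    have h2 := Nat.mul_le_mul_left κ h1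
    rw [Nat.mul_add] at h2
    simp only [ho, dd]
    split_ifs <;> omega
  have hle : ∀ j : Fin n, o j + dd n κ k j ≤ χ.natDegree := by
    intro j
    rw [hN, sum_dd n κ k hk]
    have h2 := Nat.mul_le_mul_left κ (show (j : ℕ) + 1 ≤ n from j.2)
    rw [Nat.mul_add] at h2
    simp only [ho, dd]
    split_ifs <;> omega
  have h0 : ∑ j, v j * X ^ o j = 0 := by
    refine eq_zero_of_dvd_of_degree_lt hdvd ?_
    rw [degree_eq_natDegree hχ.ne_zero, degree_lt_iff_coeff_zero]
    intro m hm
    rw [finsetSum_coeff]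
    refine Finset.sum_eq_zero fun j _ => ?_
    rw [coeff_mul_X_pow']
    split_ifs with hj
    · refine coeff_eq_zero_of_degree_lt ((hv j).trans_le ?_)
      have := hle j
      exact_mod_cast (by omega : dd n κ k j ≤ m - o j)
    · rfl
  funext j
  ext m
  by_cases hm : m < dd n κ k j
  · have h1 := congrArg (fun p => p.coeff (o j + m)) h0
    simp only [finsetSum_coeff, coeff_zero] at h1
    rw [Finset.sum_eq_single j] at h1
    · rw [coeff_mul_X_pow', if_pos (by omega)] at h1
      simpa using h1
    · intro i _ hij
      rw [coeff_mul_X_pow']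
      split_ifs with hc
      · rcases lt_or_gt_of_ne hij with h | h
        · refine coeff_eq_zero_of_degree_lt ((hv i).trans_le ?_)
          have := hlt i j h
          exact_mod_cast (by omega : dd n κ k i ≤ o j + m - o i)
        · have := hlt j i h
          omega
      · rfl
    · simp
  · exact coeff_eq_zero_of_degree_lt ((hv j).trans_le (by exact_mod_cast not_lt.mp hm))

lemma injective_perturb {V W : Type*} [AddCommGroup V] [Module ℝ V] [FiniteDimensional ℝ V]
    [AddCommGroup W] [Module ℝ W] [FiniteDimensional ℝ W]
    (hVW : Module.finrank ℝ V = Module.finrank ℝ W) (T₀ T₁ : V →ₗ[ℝ] W)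
    (h : Function.Injective T₁) :
    ∀ᶠ s in nhdsWithin (0 : ℝ) {0}ᶜ, Function.Injective (T₀ + s • T₁ : V →ₗ[ℝ] W) := by
  let e : V ≃ₗ[ℝ] W := LinearEquiv.ofBijective T₁
    ⟨h, (LinearMap.injective_iff_surjective_of_finrank_eq_finrank hVW).mp h⟩
  have he : ∀ v, e v = T₁ v := fun v => rfl
  let f : Module.End ℝ V := e.symm.toLinearMap ∘ₗ T₀
  have hfin : {s : ℝ | Module.End.HasEigenvalue f (-s)}.Finite := by
    have := Module.End.finite_hasEigenvalue f
    exact this.preimage neg_injective.injOn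
  have h2 := (hfin.subset (Set.sdiff_subset (t := {0}))).isClosed.isOpen_compl.mem_nhds
      (show (0 : ℝ) ∈ ({s : ℝ | Module.End.HasEigenvalue f (-s)} \ {0})ᶜ by simp)
  filter_upwards [mem_nhdsWithin_of_mem_nhds h2, self_mem_nhdsWithin] with s hs hs0
  rw [injective_iff_map_eq_zero]
  intro v hv
  by_contra hv0
  apply hs
  refine ⟨?_, hs0⟩
  refine Module.End.hasEigenvalue_of_hasEigenvector (x := v) ⟨?_, hv0⟩
  rw [Module.End.mem_eigenspace_iff]
  simp only [f, LinearMap.comp_apply, LinearEquiv.coe_coe]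
  rw [LinearEquiv.symm_apply_eq, map_smul, he]
  simp only [LinearMap.add_apply, LinearMap.smul_apply] at hv
  rw [neg_smul]
  exact eq_neg_of_add_eq_zero_left hv

lemma kernel_perturb {E F : Type*} [NormedAddCommGroup E] [NormedSpace ℝ E] [CompleteSpace E]
    [NormedAddCommGroup F] [NormedSpace ℝ F] [CompleteSpace F]
    (T D : E →L[ℝ] F) (hT : Function.Surjective T) {x : E} (hx : T x = 0) {P : E → Prop}
    (hP : ∀ᶠ x' in nhds x, P x') :
    ∀ᶠ s in nhds (0 : ℝ), ∃ x', P x' ∧ T x' + s • D x' = 0 := by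
  let g : ℝ × E → ℝ × F := fun p => (p.1, T p.2 + p.1 • D p.2)
  let g' : ℝ × E →L[ℝ] ℝ × F := (ContinuousLinearMap.fst ℝ ℝ E).prod
    (T ∘L ContinuousLinearMap.snd ℝ ℝ E +
      ((0 : ℝ) • (D ∘L ContinuousLinearMap.snd ℝ ℝ E) +
        (ContinuousLinearMap.fst ℝ ℝ E).smulRight (D x)))
  have hg : HasStrictFDerivAt g g' (0, x) := by
    refine HasStrictFDerivAt.prodMk (ContinuousLinearMap.fst ℝ ℝ E).hasStrictFDerivAt ?_
    refine HasStrictFDerivAt.add (T ∘L ContinuousLinearMap.snd ℝ ℝ E).hasStrictFDerivAt ?_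
    exact HasStrictFDerivAt.smul (x := ((0 : ℝ), x))
      (ContinuousLinearMap.fst ℝ ℝ E).hasStrictFDerivAt
      (D ∘L ContinuousLinearMap.snd ℝ ℝ E).hasStrictFDerivAt
  have hsurj : g'.range = ⊤ := by
    rw [LinearMap.range_eq_top]
    rintro ⟨s, u⟩
    obtain ⟨w, hw⟩ := hT (u - s • D x)
    refine ⟨(s, w), ?_⟩
    simp [g', hw]
  have hmap := hg.map_nhds_eq_of_surj hsurj
  have hg0 : g (0, x) = (0, 0) := by simp [g, hx]
  rw [hg0] at hmap
  have hP' : ∀ᶠ p : ℝ × E in nhds (0, x), P p.2 := (continuous_snd.tendsto ((0 : ℝ), x)).eventually hP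
  have h1 : g '' {p | P p.2} ∈ nhds ((0 : ℝ), (0 : F)) := by
    rw [← hmap]; exact Filter.image_mem_map hP'
  have h2 : Filter.Tendsto (fun s : ℝ => (s, (0 : F))) (nhds 0) (nhds ((0 : ℝ), (0 : F))) := by
    have : Continuous fun s : ℝ => (s, (0 : F)) := by fun_prop
    exact this.tendsto 0
  filter_upwards [h2 h1] with s hs
  obtain ⟨⟨s', x'⟩, hx', heq⟩ := hs
  simp only [g, Prod.mk.injEq] at heq
  obtain ⟨rfl, heq⟩ := heq
  exact ⟨x', hx', heq⟩

lemma parallel {n : ℕ} {K : Type*} [Field K] (M : Matrix (Fin n) (Fin n) K) (hM : M.det = 0)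
    (x y : Fin n → K) (hx : M *ᵥ x = 0) (i : Fin n) (hi : (M.adjugate *ᵥ y) i ≠ 0) :
    (M.adjugate *ᵥ y) i • x = x i • (M.adjugate *ᵥ y) := by
  set u := M.adjugate *ᵥ y with hu
  have hMu : M *ᵥ u = 0 := by
    rw [hu, Matrix.mulVec_mulVec, Matrix.mul_adjugate, hM, zero_smul, Matrix.zero_mulVec]
  obtain ⟨j, hj⟩ : ∃ j, M.adjugate i j ≠ 0 := by
    by_contra! h
    apply hi
    simp [hu, Matrix.mulVec, dotProduct, h]
  set w := u i • x - x i • u with hw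
  have hMw : M *ᵥ w = 0 := by
    rw [hw, Matrix.mulVec_sub, Matrix.mulVec_smul, Matrix.mulVec_smul, hx, hMu]; simp
  have hwi : w i = 0 := by simp [hw]; ring
  rw [Matrix.adjugate_apply] at hj
  have h0 : (M.updateRow j (Pi.single i 1)) *ᵥ w = 0 := by
    ext l
    by_cases hl : l = j
    · subst hl
      simp [Matrix.mulVec, hwi]
    · have := congrFun hMw l
      simpa [Matrix.mulVec, Matrix.updateRow_ne hl] using this
  have hw0 : w = 0 := by
    by_contra hne
    exact hj (Matrix.exists_mulVec_eq_zero_iff.mp ⟨w, hne, h0⟩)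
  exact sub_eq_zero.mp hw0

lemma dvd_of_roots {χ P : ℝ[X]} (hχ : χ.Separable)
    (h : ∀ z : ℂ, aeval z χ = 0 → aeval z P = 0) : χ ∣ P := by
  by_cases hP : P = 0
  · simp [hP]
  rw [← map_dvd_map' (algebraMap ℝ ℂ)]
  refine (IsAlgClosed.splits (χ.map (algebraMap ℝ ℂ))).dvd_of_roots_le_roots ?_ ?_
  · simpa using hχ.ne_zero
  · rw [Multiset.le_iff_subset (nodup_roots hχ.map)]
    intro z hz
    rw [mem_roots (by simpa using hχ.ne_zero), IsRoot.def, eval_map, ← aeval_def] at hz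
    rw [mem_roots (by simpa using hP), IsRoot.def, eval_map, ← aeval_def]
    exact h z hz

/-! ### Density -/

/-- The map `c ↦ polyOf c * a mod χ` in coordinates. -/
noncomputable def colMap {n q : ℕ} (χ : ℝ[X]) (N : ℕ) (a : Fin n → ℝ[X]) :
    (Fin (q + 1) → Fin n → Fin n → ℝ) →ₗ[ℝ] (Fin n → Fin N → ℝ) where
  toFun c := fun i => toFn N (modByMonicHom χ
    ((polyOf (show Fin (q + 1) → Matrix (Fin n) (Fin n) ℝ from c) *ᵥ a) i))
  map_add' c e := by
    ext1 i
    have : polyOf (show Fin (q + 1) → Matrix (Fin n) (Fin n) ℝ from (c + e)) =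
      polyOf (show Fin (q + 1) → Matrix (Fin n) (Fin n) ℝ from c) +
      polyOf (show Fin (q + 1) → Matrix (Fin n) (Fin n) ℝ from e) := polyOf_add _ _
    simp only [this, Matrix.add_mulVec, Pi.add_apply, map_add]
  map_smul' t c := by
    ext1 i
    have h1 : (polyOf (show Fin (q + 1) → Matrix (Fin n) (Fin n) ℝ from (t • c)) *ᵥ a) i =
        t • (polyOf (show Fin (q + 1) → Matrix (Fin n) (Fin n) ℝ from c) *ᵥ a) i := by
      simp only [Matrix.mulVec, dotProduct, Finset.smul_sum]
      refine Finset.sum_congr rfl fun j _ => ?_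
      have := polyOf_smul t (show Fin (q + 1) → Matrix (Fin n) (Fin n) ℝ from c) i j
      rw [smul_eq_C_mul, ← mul_assoc, ← this]
      rfl
    rw [h1, map_smul, map_smul]
    rfl

lemma colMap_eq_zero {n q : ℕ} {χ : ℝ[X]} (hχ : χ.Monic) {N : ℕ} (hN : χ.natDegree = N)
    (a : Fin n → ℝ[X]) (c : Fin (q + 1) → Matrix (Fin n) (Fin n) ℝ) :
    colMap χ N a c = 0 ↔ ∀ i, χ ∣ (polyOf c *ᵥ a) i := by
  rw [funext_iff]
  refine forall_congr' fun i => ?_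
  change toFn N ((polyOf c *ᵥ a) i %ₘ χ) = 0 ↔ _
  rw [toFn_eq_zero (degree_mod_lt hχ hN _), modByMonic_eq_zero_iff_dvd hχ]

lemma colMap_add_smul {n q : ℕ} (χ : ℝ[X]) (N : ℕ) (a a' : Fin n → ℝ[X]) (s : ℝ)
    (c : Fin (q + 1) → Matrix (Fin n) (Fin n) ℝ) :
    colMap χ N (a + s • a') c = colMap χ N a c + s • colMap χ N a' c := by
  ext1 i
  change toFn N (modByMonicHom χ ((polyOf c *ᵥ (a + s • a')) i)) =
    toFn N (modByMonicHom χ ((polyOf c *ᵥ a) i)) +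
    s • toFn N (modByMonicHom χ ((polyOf c *ᵥ a') i))
  rw [Matrix.mulVec_add, Matrix.mulVec_smul, Pi.add_apply, Pi.smul_apply, map_add, map_add,
    map_smul, map_smul]

lemma balMap_add_smul {n : ℕ} (d : Fin n → ℕ) (χ : ℝ[X]) (N : ℕ) (a a' : Fin n → ℝ[X]) (s : ℝ) :
    balMap d χ N (a + s • a') = balMap d χ N a + s • balMap d χ N a' := by
  refine LinearMap.ext fun v => ?_
  rw [LinearMap.add_apply, LinearMap.smul_apply, balMap_apply, balMap_apply, balMap_apply]
  have h1 : ∑ j, ofFn (d j) (v j) * (a + s • a') j =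
      (∑ j, ofFn (d j) (v j) * a j) + s • ∑ j, ofFn (d j) (v j) * a' j := by
    simp only [Pi.add_apply, Pi.smul_apply, mul_add, Finset.sum_add_distrib, mul_smul_comm,
      Finset.smul_sum]
  rw [h1, add_modByMonic, smul_modByMonic, map_add, map_smul]

lemma colMap_surj {n q : ℕ} (c : Fin (q + 1) → Matrix (Fin n) (Fin n) ℝ) {χ : ℝ[X]}
    (hχ : χ.Monic) {N : ℕ} (hN : χ.natDegree = N)
    (hdvd : χ ∣ (polyOf c).det) (hlc : (polyOf c).det.coeff (n * q) ≠ 0) (y : Fin n → ℝ[X])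
    (h : ∀ z : ℂ, aeval z χ = 0 → ∃ j, aeval z (((polyOf c).adjugate *ᵥ y) j) ≠ 0) :
    Function.Surjective (colMap (q := q) χ N ((polyOf c).adjugate *ᵥ y)) := by
  intro R
  choose v hv hdv using fun i => row_surj c hχ.ne_zero hdvd hlc y h (ofFn N (R i))
  refine ⟨tupleOf q (Matrix.of v), ?_⟩
  ext1 i
  change toFn N ((polyOf (tupleOf q (Matrix.of v)) *ᵥ _) i %ₘ χ) = R i
  rw [polyOf_tupleOf (Matrix.of v) hv]
  have h1 := (modByMonic_eq_zero_iff_dvd hχ).mpr (hdv i)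
  rw [sub_modByMonic, sub_eq_zero] at h1
  have h2 : (Matrix.of v *ᵥ ((polyOf c).adjugate *ᵥ y)) i =
    ∑ j, v i j * ((polyOf c).adjugate *ᵥ y) j := rfl
  rw [h2, ← h1, (modByMonic_eq_self_iff hχ).mpr, toFn_comp_ofFn_eq_id]
  rw [degree_eq_natDegree hχ.ne_zero, hN]
  exact ofFn_degree_lt _

lemma aeval_mulVec {n : ℕ} (M : Matrix (Fin n) (Fin n) ℝ[X]) (y : Fin n → ℝ[X]) (z : ℂ)
    (i : Fin n) : aeval z ((M *ᵥ y) i) = (evalMat M z *ᵥ fun j => aeval z (y j)) i := by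
  simp [Matrix.mulVec, dotProduct, evalMat]

lemma adjugate_evalMat {n : ℕ} (M : Matrix (Fin n) (Fin n) ℝ[X]) (z : ℂ) :
    (evalMat M z).adjugate = evalMat M.adjugate z :=
  (RingHom.map_adjugate (aeval z : ℝ[X] →ₐ[ℝ] ℂ).toRingHom M).symm

/-- The final step: a nearby tuple whose kernel vector is balanced. -/
lemma inU_of_kernel {n q κ k : ℕ} (c : Fin (q + 1) → Matrix (Fin n) (Fin n) ℝ)
    {χ : ℝ[X]} (hsep : χ.Separable) (hN : χ.natDegree = ∑ j, dd n κ k j)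
    (hk : (κ < q ∧ k < n) ∨ (κ = q ∧ k = 0)) (y α : Fin n → ℝ[X])
    (hy : ∀ j, (y j).natDegree ≤ 0)
    (hχi : Split χ 1)
    (hsplit : ∃ (a : Fin χ.natDegree → ℝ) (ψ' : ℝ[X]), Split (mon a) ψ' ∧
      (polyOf c).det = mon a * ψ')
    (hroot : ∀ z : ℂ, aeval z χ = 0 → ∃ j, aeval z (((polyOf c).adjugate *ᵥ y) j) ≠ 0)
    (hker : ∀ i, χ ∣ (polyOf c *ᵥ α) i) (hbal : Bal (dd n κ k) χ α) : InU c := by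
  have hχ := hχi.monic
  have hkz : ∀ z : ℂ, aeval z χ = 0 → evalMat (polyOf c) z *ᵥ (fun j => aeval z (α j)) = 0 := by
    intro z hz
    ext i
    rw [← aeval_mulVec]
    obtain ⟨r, hr⟩ := hker i
    rw [hr, map_mul, hz, zero_mul]; rfl
  have hαz : ∀ z : ℂ, aeval z χ = 0 → (fun j => aeval z (α j)) ≠ 0 := by
    intro z hz h0
    obtain ⟨v, -, r, hr⟩ := hbal.surj hχ hN 1
    have h1 := congrArg (aeval z) hr
    have h2 : ∀ j, aeval z (α j) = 0 := fun j => congrFun h0 j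
    simp [hz, h2] at h1
  have hdz : ∀ z : ℂ, aeval z χ = 0 → (evalMat (polyOf c) z).det = 0 := fun z hz =>
    Matrix.exists_mulVec_eq_zero_iff.mp ⟨_, hαz z hz, hkz z hz⟩
  obtain ⟨a', ψ', hs, hdet⟩ := hsplit
  have hdvd : χ ∣ mon a' := by
    have h1 : χ ∣ mon a' * ψ' := by
      rw [← hdet]
      refine dvd_of_roots hsep fun z hz => ?_
      rw [← det_evalMat]; exact hdz z hz
    have h2 : IsCoprime χ ψ' := isCoprime_of_no_common_root fun z h1 h2 =>
      (hχi.inside z h1).not_gt (hs.outside z h2)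
    exact h2.dvd_of_dvd_mul_right h1
  have heq : mon a' = χ := (eq_of_monic_of_dvd_of_natDegree_le hχ (mon_monic a') hdvd
    (mon_natDegree a').le)
  rw [heq] at hs hdet
  refine ⟨κ, k, χ, ψ', y, hk, hs, hN, hdet, hy, ?_⟩
  intro v hv hdv
  refine hbal v hv (dvd_of_roots hsep fun z hz => ?_)
  obtain ⟨i, hi⟩ := hroot z hz
  have hpar := parallel (evalMat (polyOf c) z) (hdz z hz) (fun j => aeval z (α j))
    (fun j => aeval z (y j)) (hkz z hz) i (by rwa [adjugate_evalMat, ← aeval_mulVec])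
  have hu : ∀ j, ((evalMat (polyOf c) z).adjugate *ᵥ fun j => aeval z (y j)) j =
      aeval z (((polyOf c).adjugate *ᵥ y) j) := fun j => by
    rw [adjugate_evalMat, ← aeval_mulVec]
  have hz0 : ∑ j, aeval z (v j) * aeval z (((polyOf c).adjugate *ᵥ y) j) = 0 := by
    obtain ⟨r, hr⟩ := hdv
    have := congrArg (aeval z) hr
    simpa [hz] using this
  apply (mul_eq_zero.mp _).resolve_left hi
  have hj : ∀ j, aeval z (((polyOf c).adjugate *ᵥ y) i) * aeval z (α j) =
      aeval z (α i) * aeval z (((polyOf c).adjugate *ᵥ y) j) := by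
    intro j
    have := congrFun hpar j
    simpa only [Pi.smul_apply, smul_eq_mul, hu] using this
  rw [map_sum, Finset.mul_sum]
  simp only [map_mul]
  calc _ = ∑ j, aeval z (α i) * (aeval z (v j) * aeval z (((polyOf c).adjugate *ᵥ y) j)) := by
        refine Finset.sum_congr rfl fun j _ => ?_
        linear_combination (aeval z (v j)) * hj j
    _ = 0 := by rw [← Finset.mul_sum, hz0, mul_zero]

lemma frequently_InU {n q : ℕ} (hn : 0 < n) (c : Fin (q + 1) → Matrix (Fin n) (Fin n) ℝ)
    (hS : ∀ z : ℂ, ‖z‖ = 1 → aeval z (polyOf c).det ≠ 0) (hsep : (polyOf c).det.Separable)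
    (hlc : (polyOf c).det.coeff (n * q) ≠ 0) : ∃ᶠ c' in nhds c, InU c' := by
  have hne : (polyOf c).det ≠ 0 := hsep.ne_zero
  obtain ⟨χ, ψ, hs, hdet⟩ := exists_split _ hne hS
  have hχ := hs.monic
  have hdvd : χ ∣ (polyOf c).det := ⟨ψ, hdet⟩
  have hχsep : χ.Separable := hsep.of_dvd hdvd
  obtain ⟨m, hm⟩ : ∃ m, n * q = χ.natDegree + m := by
    have h1 := natDegree_det_polyOf c
    have h2 := hs.ne_zero
    rw [hdet, natDegree_mul (left_ne_zero_of_mul h2) (right_ne_zero_of_mul h2)] at h1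
    exact ⟨n * q - χ.natDegree, by omega⟩
  have hχ1 : Split χ 1 := ⟨hχ, hs.inside, fun z hz => by simp at hz⟩
  obtain ⟨κ, k, hk, hN⟩ : ∃ κ k, ((κ < q ∧ k < n) ∨ (κ = q ∧ k = 0)) ∧
      χ.natDegree = ∑ j, dd n κ k j := by
    have hmod := Nat.div_add_mod χ.natDegree n
    have hlt := Nat.mod_lt χ.natDegree hn
    refine ⟨χ.natDegree / n, χ.natDegree % n, ?_, ?_⟩
    · rcases Nat.lt_or_ge (χ.natDegree / n) q with h | h
      · exact Or.inl ⟨h, hlt⟩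
      · have h1 := Nat.mul_le_mul_left n h
        have h2 : n * (χ.natDegree / n) = n * q := by omega
        exact Or.inr ⟨Nat.eq_of_mul_eq_mul_left hn h2, by omega⟩
    · rw [sum_dd _ _ _ hlt.le, mul_comm]; exact hmod.symm
  have hkn : k ≤ n := by omega
  let Z : Finset ℂ := (χ.map (algebraMap ℝ ℂ)).roots.toFinset
  have hZ : ∀ z : ℂ, z ∈ Z ↔ aeval z χ = 0 := by
    intro z
    simp only [Z, Multiset.mem_toFinset]
    rw [mem_roots (by simpa using hχ.ne_zero), IsRoot.def, eval_map, ← aeval_def]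
  obtain ⟨y₀, hy₀⟩ := exists_generic_vector Z (fun z => evalMat (polyOf c).adjugate z)
    (fun z _ => adj_ne_zero_of_separable hn _ hsep z)
  let y : Fin n → ℝ[X] := fun j => C (y₀ j)
  have hy : ∀ j, (y j).natDegree ≤ 0 := fun j => by simp [y]
  have hroot : ∀ z : ℂ, aeval z χ = 0 → ∃ j, aeval z (((polyOf c).adjugate *ᵥ y) j) ≠ 0 := by
    intro z hz
    by_contra! h
    apply hy₀ z ((hZ z).mpr hz)
    ext j
    have := h j
    rw [aeval_mulVec] at this
    simpa [y] using this
  set a := (polyOf c).adjugate *ᵥ y with ha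
  let a' : Fin n → ℝ[X] := fun j => X ^ (κ * j + min (j : ℕ) k)
  have hbal' : Bal (dd n κ k) χ a' := bal_model n κ k hkn hχ hN
  have hpert := injective_perturb (by simp [Module.finrank_pi_fintype, hN])
    (balMap (dd n κ k) χ χ.natDegree a) (balMap (dd n κ k) χ χ.natDegree a')
    ((bal_iff_injective hχ rfl a').mp hbal')
  have hsurj := colMap_surj c hχ rfl hdvd hlc y hroot
  have hker0 : colMap χ χ.natDegree a c = 0 := by
    rw [colMap_eq_zero hχ rfl]
    intro i
    rw [ha, Matrix.mulVec_mulVec, Matrix.mul_adjugate, Matrix.smul_mulVec, Matrix.one_mulVec]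
    exact hdvd.mul_right _
  have hev1 := exists_split_nhds (CC.det (polyOf_cc (n := n) (q := q)))
    (fun c => (natDegree_det_polyOf c).trans hm.le) hs rfl hdet hne (Pr := fun _ => True)
    (Filter.Eventually.of_forall fun _ => trivial)
  have hev2 : ∀ᶠ c' in nhds c, ∀ z ∈ Z, ∃ j,
      aeval z (((polyOf c').adjugate *ᵥ y) j) ≠ 0 := by
    rw [Filter.eventually_all_finset]
    intro z hz
    obtain ⟨j, hj⟩ := hroot z ((hZ z).mp hz)
    have hcont := CC.aeval (cc_adj (q := q) y j) (D := n * q + 1)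
      (fun c => Nat.lt_succ_of_le (natDegree_adj hy c j))
    have hcont2 : Continuous fun c' : Fin (q + 1) → Matrix (Fin n) (Fin n) ℝ =>
        aeval z (((polyOf c').adjugate *ᵥ y) j) :=
      hcont.comp (continuous_id.prodMk continuous_const)
    filter_upwards [hcont2.continuousAt.eventually_ne hj] with c' hc'
    exact ⟨j, hc'⟩
  rw [Filter.frequently_iff]
  intro V hV
  have hall := Filter.inter_mem (Filter.inter_mem hev1 hev2) hV
  have hkp := kernel_perturb (E := Fin (q + 1) → Fin n → Fin n → ℝ)
    (LinearMap.toContinuousLinearMap (colMap χ χ.natDegree a))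
    (LinearMap.toContinuousLinearMap (colMap χ χ.natDegree a')) hsurj (x := c) hker0 hall
  obtain ⟨s, ⟨c', hc', hcs⟩, hinj⟩ :=
    ((hkp.filter_mono nhdsWithin_le_nhds).and hpert).exists
  obtain ⟨⟨hc1, hc2⟩, hc3⟩ := hc'
  refine ⟨c', hc3, ?_⟩
  refine inU_of_kernel c' hχsep hN hk y (a + s • a') hy hχ1 ?_ ?_ ?_ ?_
  · obtain ⟨e, ψ', -, h2, h3⟩ := hc1
    exact ⟨e, ψ', h2, h3⟩
  · exact fun z hz => hc2 z ((hZ z).mpr hz)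
  · exact (colMap_eq_zero hχ rfl (a + s • a') c').mp
      ((colMap_add_smul χ χ.natDegree a a' s c').trans hcs)
  · rw [bal_iff_injective hχ rfl, balMap_add_smul]
    exact hinj

/-- genericity of WHFs with partial indices of type (κ,k). -/
theorem stmt3 {n q : ℕ} :
    IsOpen {c : Fin (q + 1) → Matrix (Fin n) (Fin n) ℝ |
      ∀ z : ℂ, ‖z‖ = 1 → (evalMat (polyOf c) z).det ≠ 0} ∧
    ∃ U : Set (Fin (q + 1) → Matrix (Fin n) (Fin n) ℝ),
      U ⊆ {c | ∀ z : ℂ, ‖z‖ = 1 → (evalMat (polyOf c) z).det ≠ 0} ∧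
      IsOpen U ∧
      {c : Fin (q + 1) → Matrix (Fin n) (Fin n) ℝ |
        ∀ z : ℂ, ‖z‖ = 1 → (evalMat (polyOf c) z).det ≠ 0} ⊆ closure U ∧
      ∀ c ∈ U, ∃ (κ k : ℕ) (p F : Matrix (Fin n) (Fin n) (Polynomial ℝ)),
        ((κ < q ∧ k < n) ∨ (κ = q ∧ k = 0)) ∧
        IsWHF (polyOf c) p F (idx n κ k) := by
  refine ⟨isOpen_S, ?_⟩
  rcases Nat.eq_zero_or_pos n with rfl | hn
  · refine ⟨Set.univ, fun c _ z _ => by simp, isOpen_univ, by simp, fun c _ => ?_⟩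
    refine ⟨q, 0, 1, 1, Or.inr ⟨rfl, rfl⟩, ⟨fun z _ => by simp, fun z _ => by simp,
      fun i => i.elim0, Subsingleton.elim _ _⟩⟩
  · refine ⟨{c | InU c}, ?_, isOpen_InU, ?_, ?_⟩
    · rintro c ⟨κ, k, χ, ψ, y, hk, hs, hN, hdet, hy, hbal⟩ z hz
      rw [det_evalMat, hdet]
      exact hs.ne_zero_on_circle hz
    · intro c hc
      rw [← closure_closure, mem_closure_iff_frequently]
      refine ((generic_separable c).and_eventually (isOpen_S.mem_nhds hc)).mono ?_
      rintro c' ⟨⟨h1, h2⟩, h3⟩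
      rw [mem_closure_iff_frequently]
      exact frequently_InU hn c' (fun z hz => by rw [← det_evalMat]; exact h3 z hz) h1 h2
    · rintro c ⟨κ, k, χ, ψ, y, hk, hs, hN, hdet, hy, hbal⟩
      obtain ⟨p, F, h⟩ := exists_whf (polyOf c) κ k χ ψ y hs hN hdet hbal
      exact ⟨κ, k, p, F, hk, h⟩
end

section
/- Let Θ ⊆ ℝ^q be compact, U ⊆ Θ open (in ℝ^q) with θ₀ ∈ U, and let (Ω, 𝔉, P) be a probability space. For each T ∈ ℕ let L_T : Ω × Θ → ℝ be such that for each ω the map θ ↦ L_T(ω,θ) is twice continuously differentiable on U, with gradient ∇L_T and Hessian ∇²L_T. Assume: (i) the laws of the random vectors √T · ∇L_T(·, θ₀) converge weakly, as T → ∞, to the centered multivariate Gaussian distribution on ℝ^q with covariance matrix B (B positive semidefinite); (ii) there is a compact ball K ⊆ U of positive radius centered at θ₀ and a continuous non-random matrix-valued function A : K → ℝ^{q×q}, with A(θ₀) nonsingular, such that sup_{θ∈K} ‖∇²L_T(·,θ) − A(θ)‖ converges to 0 in probability; (iii) θ̂_T : Ω → Θ are measurable, satisfy ∇L_T(ω,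 θ̂_T(ω)) = 0 whenever θ̂_T(ω) ∈ U, and converge to θ₀ in probability. Then the laws of √T(θ̂_T − θ₀) converge weakly to the centered multivariate Gaussian distribution on ℝ^q with covariance matrix A(θ₀)^{−1} B A(θ₀)^{−1}. -/
open MeasureTheory Filter Matrix ProbabilityTheory
open scoped RealInnerProductSpace

/-- The Hessian matrix of f : ℝ^q → ℝ at x, as the matrix of the derivative of the
gradient in the standard basis. -/
noncomputable def hessMat {q : ℕ} (f : EuclideanSpace ℝ (Fin q) → ℝ)
    (x : EuclideanSpace ℝ (Fin q)) : Matrix (Fin q) (Fin q) ℝ :=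
  Matrix.of fun i j => (fderiv ℝ (fun y => gradient f y) x) (EuclideanSpace.single j 1) i

/-- ν is the centered Gaussian law on ℝ^q with covariance matrix S: every linear
functional ⟨l,·⟩ has law N(0, lᵀSl). -/
def IsCenteredGaussianLaw {q : ℕ} (ν : Measure (EuclideanSpace ℝ (Fin q)))
    (S : Matrix (Fin q) (Fin q) ℝ) : Prop :=
  ∀ l : EuclideanSpace ℝ (Fin q),
    ν.map (fun x => ⟪l, x⟫) =
      gaussianReal 0 (Real.toNNReal ((fun i => l i) ⬝ᵥ S.mulVec fun i => l i))

/-- Convergence in distribution (weak convergence of the laws). -/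
def TendstoInDistribution {Ω E : Type*} [MeasurableSpace Ω] [MeasurableSpace E]
    [TopologicalSpace E] (X : ℕ → Ω → E) (P : Measure Ω) (ν : Measure E) : Prop :=
  ∀ f : BoundedContinuousFunction E ℝ,
    Tendsto (fun T : ℕ => ∫ x, f x ∂(Measure.map (X T) P)) atTop (nhds (∫ x, f x ∂ν))

lemma opnorm_le_of_entries {q : ℕ}
    (L : EuclideanSpace ℝ (Fin q) →L[ℝ] EuclideanSpace ℝ (Fin q)) (δ : ℝ) (hδ : 0 ≤ δ)
    (h : ∀ i j, |L (EuclideanSpace.single j 1) i| ≤ δ) : ‖L‖ ≤ (q : ℝ) ^ 2 * δ := by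
  refine L.opNorm_le_bound (by positivity) fun x => ?_
  have hx : x = ∑ j, x j • EuclideanSpace.single j (1 : ℝ) := by
    ext i
    simp [Finset.sum_apply, Pi.single_apply]
  have hLe : ∀ j, ‖L (EuclideanSpace.single j 1)‖ ≤ q * δ := by
    intro j
    have h1 : L (EuclideanSpace.single j 1)
        = ∑ i, (L (EuclideanSpace.single j 1)) i • EuclideanSpace.single i (1 : ℝ) := by
      ext i
      simp [Finset.sum_apply, Pi.single_apply]
    rw [h1]
    refine (norm_sum_le _ _).trans ?_
    refine (Finset.sum_le_sum (g := fun _ => δ) fun i _ => ?_).trans ?_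
    · rw [norm_smul]; simpa using h i j
    · simp
  calc ‖L x‖ = ‖∑ j, x j • L (EuclideanSpace.single j (1 : ℝ))‖ := by
        conv_lhs => rw [hx]
        simp only [map_sum, map_smul]
    _ ≤ ∑ j : Fin q, ‖x‖ * (q * δ) := by
        refine (norm_sum_le _ _).trans (Finset.sum_le_sum fun j _ => ?_)
        rw [norm_smul]
        exact mul_le_mul (PiLp.norm_apply_le x j) (hLe j) (norm_nonneg _) (norm_nonneg _)
    _ = (q : ℝ) ^ 2 * δ * ‖x‖ := by simp; ring

lemma gradient_diff {q : ℕ} {U : Set (EuclideanSpace ℝ (Fin q))} (hU : IsOpen U)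
    {f : EuclideanSpace ℝ (Fin q) → ℝ} (hf : ContDiffOn ℝ 2 f U)
    {x : EuclideanSpace ℝ (Fin q)} (hx : x ∈ U) :
    DifferentiableAt ℝ (fun y => gradient f y) x ∧ DifferentiableAt ℝ (fderiv ℝ f) x := by
  have h1 : ContDiffAt ℝ 2 f x := hf.contDiffAt (hU.mem_nhds hx)
  have h2 : DifferentiableAt ℝ (fderiv ℝ f) x :=
    (h1.fderiv_right (m := 1) (by norm_num)).differentiableAt (by norm_num)
  refine ⟨?_, h2⟩
  exact ((InnerProductSpace.toDual ℝ (EuclideanSpace ℝ (Fin q))).symm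
    |>.toContinuousLinearEquiv.toContinuousLinearMap.differentiableAt).comp x h2

lemma hessMat_symm {q : ℕ} {U : Set (EuclideanSpace ℝ (Fin q))} (hU : IsOpen U)
    {f : EuclideanSpace ℝ (Fin q) → ℝ} (hf : ContDiffOn ℝ 2 f U)
    {x : EuclideanSpace ℝ (Fin q)} (hx : x ∈ U) (i j : Fin q) :
    hessMat f x i j = hessMat f x j i := by
  have h1 : ContDiffAt ℝ 2 f x := hf.contDiffAt (hU.mem_nhds hx)
  have hs := h1.isSymmSndFDerivAt (by simp)
  obtain ⟨_, h2⟩ := gradient_diff hU hf hx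
  have key : ∀ v : EuclideanSpace ℝ (Fin q), fderiv ℝ (fun y => gradient f y) x v
      = (InnerProductSpace.toDual ℝ (EuclideanSpace ℝ (Fin q))).symm
        (fderiv ℝ (fderiv ℝ f) x v) := by
    intro v
    have := ((InnerProductSpace.toDual ℝ (EuclideanSpace ℝ (Fin q))).symm
      |>.toContinuousLinearEquiv.toContinuousLinearMap.hasFDerivAt).comp x h2.hasFDerivAt
    have h3 := this.fderiv
    have h4 := congrArg (fun L => L v) h3
    exact h4
  have e : ∀ i j, hessMat f x i j = fderiv ℝ (fderiv ℝ f) x (EuclideanSpace.single j 1)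
      (EuclideanSpace.single i 1) := by
    intro i j
    simp only [hessMat, Matrix.of_apply]
    rw [key, ← InnerProductSpace.toDual_symm_apply, real_inner_comm]
    simp [EuclideanSpace.inner_single_left]
  rw [e, e]
  exact hs.eq _ _

lemma core_bound {q : ℕ} {U : Set (EuclideanSpace ℝ (Fin q))} (hU : IsOpen U)
    {f : EuclideanSpace ℝ (Fin q) → ℝ} (hf : ContDiffOn ℝ 2 f U)
    {θ₀ θ : EuclideanSpace ℝ (Fin q)} {ρ : ℝ} (hK : Metric.closedBall θ₀ ρ ⊆ U)
    (hθ : ‖θ - θ₀‖ ≤ ρ) (A0 : Matrix (Fin q) (Fin q) ℝ) {δ : ℝ} (hδ : 0 ≤ δ)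
    (hH : ∀ x ∈ Metric.closedBall θ₀ ρ, ∀ i j, |hessMat f x i j - A0 i j| ≤ δ)
    (hcrit : gradient f θ = 0) :
    ‖gradient f θ₀ + Matrix.toEuclideanCLM (𝕜 := ℝ) A0 (θ - θ₀)‖
      ≤ (q : ℝ) ^ 2 * δ * ‖θ - θ₀‖ := by
  have hρ : 0 ≤ ρ := (norm_nonneg _).trans hθ
  have := (convex_closedBall θ₀ ρ).norm_image_sub_le_of_norm_fderiv_le' (𝕜 := ℝ)
    (f := fun y => gradient f y) (φ := Matrix.toEuclideanCLM (𝕜 := ℝ) A0)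
    (C := (q : ℝ) ^ 2 * δ) (x := θ₀) (y := θ)
    (fun x hx => (gradient_diff hU hf (hK hx)).1) (fun x hx => ?_)
    (Metric.mem_closedBall_self hρ) (by simpa [dist_eq_norm] using hθ)
  · rw [hcrit, zero_sub, ← neg_add', norm_neg] at this
    exact this
  · refine opnorm_le_of_entries _ δ hδ fun i j => ?_
    have := hH x hx i j
    simpa [hessMat, Matrix.ofLp_toEuclideanCLM] using this

lemma solve_bound {E : Type*} [NormedAddCommGroup E] [NormedSpace ℝ E]
    (M N : E →L[ℝ] E) (hNM : ∀ x, N (M x) = x) (s x : E) (κ : ℝ) (hκ : 0 ≤ κ)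
    (hκ2 : κ * ‖N‖ ≤ 1 / 2) (h : ‖s + M x‖ ≤ κ * ‖x‖) :
    ‖x + N s‖ ≤ 2 * ‖N‖ ^ 2 * κ * ‖s‖ := by
  have h1 : ‖x + N s‖ ≤ ‖N‖ * (κ * ‖x‖) := by
    have : x + N s = N (s + M x) := by rw [map_add, hNM, add_comm]
    rw [this]
    exact (N.le_opNorm _).trans (by gcongr)
  have h2 : ‖N s‖ ≤ ‖N‖ * ‖s‖ := N.le_opNorm _
  have h3 : ‖x‖ ≤ ‖x + N s‖ + ‖N s‖ := by
    simpa using norm_sub_le (x + N s) (N s)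
  have h4 : ‖x‖ ≤ 2 * (‖N‖ * ‖s‖) := by
    nlinarith [norm_nonneg x]
  calc _ ≤ ‖N‖ * (κ * ‖x‖) := h1
    _ ≤ ‖N‖ * (κ * (2 * (‖N‖ * ‖s‖))) := by gcongr
    _ = _ := by ring

lemma tight_of_tendsto {E : Type*} [NormedAddCommGroup E] [MeasurableSpace E] [BorelSpace E]
    (μ : ℕ → ProbabilityMeasure E) (ν : ProbabilityMeasure E)
    (h : Tendsto μ atTop (nhds ν)) (η : ENNReal) (hη : 0 < η) :
    ∃ M : ℝ, 0 < M ∧ ∀ᶠ n in atTop, (μ n : Measure E) {x | M ≤ ‖x‖} ≤ η := by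
  have hlim : Tendsto (fun n : ℕ => (ν : Measure E) {x | (n : ℝ) + 1 ≤ ‖x‖}) atTop (nhds 0) := by
    have h0 := tendsto_measure_iInter_atTop (μ := (ν : Measure E))
      (s := fun n : ℕ => {x : E | (n : ℝ) + 1 ≤ ‖x‖})
      (fun n => (isClosed_le continuous_const continuous_norm).measurableSet.nullMeasurableSet)
      (fun m n hmn x hx => by
        have : (m : ℝ) ≤ n := by exact_mod_cast hmn
        simp only [Set.mem_setOf_eq] at hx ⊢
        linarith) ⟨0, measure_ne_top _ _⟩
    have he : (⋂ n : ℕ, {x : E | (n : ℝ) + 1 ≤ ‖x‖}) = ∅ := by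
      ext x
      simp only [Set.mem_iInter, Set.mem_setOf_eq, Set.mem_empty_iff_false, iff_false, not_forall,
        not_le]
      obtain ⟨n, hn⟩ := exists_nat_gt ‖x‖
      exact ⟨n, by linarith⟩
    rw [he, measure_empty] at h0
    exact h0
  obtain ⟨n, hn⟩ := (hlim.eventually_lt_const hη).exists
  refine ⟨n + 1, by positivity, ?_⟩
  have hc := ProbabilityMeasure.limsup_measure_closed_le_of_tendsto h
    (F := {x : E | (n : ℝ) + 1 ≤ ‖x‖}) (isClosed_le continuous_const continuous_norm)
  have := eventually_lt_of_limsup_lt (hc.trans_lt hn)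
  filter_upwards [this] with k hk using hk.le

lemma gaussian_map {q : ℕ} {ν : Measure (EuclideanSpace ℝ (Fin q))}
    {B : Matrix (Fin q) (Fin q) ℝ} (hν : IsCenteredGaussianLaw ν B)
    (R : Matrix (Fin q) (Fin q) ℝ) (hR : Rᵀ = R) :
    IsCenteredGaussianLaw (ν.map fun x => -(Matrix.toEuclideanCLM (𝕜 := ℝ) R x))
      (R * B * R) := by
  intro l
  have hm : Measurable fun x => -(Matrix.toEuclideanCLM (𝕜 := ℝ) R x) := by fun_prop
  rw [Measure.map_map (by fun_prop) hm]
  have h1 : (fun x => ⟪l, x⟫) ∘ (fun x => -(Matrix.toEuclideanCLM (𝕜 := ℝ) R x))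
      = fun x => ⟪-(Matrix.toEuclideanCLM (𝕜 := ℝ) R l), x⟫ := by
    funext x
    simp only [Function.comp_apply, inner_neg_right, inner_neg_left, neg_inj]
    rw [Matrix.inner_toEuclideanCLM, real_inner_comm, Matrix.inner_toEuclideanCLM,
      Matrix.dotProduct_mulVec, ← Matrix.mulVec_transpose, hR, dotProduct_comm]
  rw [h1, hν]
  congr 2
  have h2 : (fun i => (-(Matrix.toEuclideanCLM (𝕜 := ℝ) R l)) i)
      = -(R *ᵥ (fun i => l i)) := by
    funext i
    simp [Matrix.ofLp_toEuclideanCLM]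
  rw [h2, Matrix.mulVec_neg, neg_dotProduct_neg]
  rw [← Matrix.mulVec_mulVec, ← Matrix.mulVec_mulVec, Matrix.dotProduct_mulVec (fun i => l i) R,
    ← Matrix.mulVec_transpose, hR]

lemma eventually_aemeasurable {Ω E : Type*} [MeasurableSpace Ω] [MeasurableSpace E]
    [TopologicalSpace E] (P : Measure Ω) (S : ℕ → Ω → E) (ν : Measure E)
    [IsProbabilityMeasure ν] (h : _root_.TendstoInDistribution S P ν) :
    ∀ᶠ T in atTop, AEMeasurable (S T) P := by
  have h1 := h (BoundedContinuousFunction.const E 1)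
  simp only [BoundedContinuousFunction.const_apply, integral_const, probReal_univ, one_smul,
    smul_eq_mul, mul_one] at h1
  filter_upwards [h1.eventually_ne (one_ne_zero)] with T hT
  by_contra hc
  apply hT
  rw [Measure.map_of_not_aemeasurable hc]
  simp

/-- asymptotic normality of √T(θ̂_T − θ₀). -/
theorem stmt6 {q : ℕ} (Θ U : Set (EuclideanSpace ℝ (Fin q)))
    (hΘc : IsCompact Θ) (hU : IsOpen U) (hUΘ : U ⊆ Θ)
    (θ₀ : EuclideanSpace ℝ (Fin q)) (hθ₀ : θ₀ ∈ U)
    {Ω : Type*} [MeasurableSpace Ω] (P : Measure Ω) [IsProbabilityMeasure P]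
    (LT : ℕ → Ω → EuclideanSpace ℝ (Fin q) → ℝ)
    (hC2 : ∀ T ω, ContDiffOn ℝ 2 (LT T ω) U)
    -- (i) CLT for the score
    (B : Matrix (Fin q) (Fin q) ℝ) (hB : B.PosSemidef)
    (hscore : ∃ νB : Measure (EuclideanSpace ℝ (Fin q)), IsProbabilityMeasure νB ∧
      IsCenteredGaussianLaw νB B ∧
      TendstoInDistribution
        (fun T ω => (Real.sqrt T) • gradient (LT T ω) θ₀) P νB)
    -- (ii) ULLN for the Hessian on a compact ball K around θ₀
    (r : ℝ) (hr : 0 < r) (hKU : Metric.closedBall θ₀ r ⊆ U)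
    (A : EuclideanSpace ℝ (Fin q) → Matrix (Fin q) (Fin q) ℝ)
    (hAcont : ContinuousOn A (Metric.closedBall θ₀ r))
    (hAnonsing : (A θ₀).det ≠ 0)
    (hHess : ∀ δ : ℝ, 0 < δ →
      Tendsto (fun T : ℕ =>
          P {ω | ∃ θ ∈ Metric.closedBall θ₀ r, ∃ i j : Fin q,
            δ < |hessMat (LT T ω) θ i j - A θ i j|})
        atTop (nhds 0))
    -- (iii) consistent approximate critical points
    (θhat : ℕ → Ω → EuclideanSpace ℝ (Fin q))
    (hθhatMeas : ∀ T, Measurable (θhat T))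
    (hθhatΘ : ∀ T ω, θhat T ω ∈ Θ)
    (hcrit : ∀ T ω, θhat T ω ∈ U → gradient (LT T ω) (θhat T ω) = 0)
    (hconsistent : ∀ ε : ℝ, 0 < ε →
      Tendsto (fun T : ℕ => P {ω | ε < ‖θhat T ω - θ₀‖}) atTop (nhds 0)) :
    ∃ ν : Measure (EuclideanSpace ℝ (Fin q)), IsProbabilityMeasure ν ∧
      IsCenteredGaussianLaw ν ((A θ₀)⁻¹ * B * (A θ₀)⁻¹) ∧
      TendstoInDistribution
        (fun T ω => (Real.sqrt T) • (θhat T ω - θ₀)) P ν := by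
  classical
  obtain ⟨νB, hνB, hgB, hS⟩ := hscore
  have hθK : θ₀ ∈ Metric.closedBall θ₀ r := Metric.mem_closedBall_self hr.le
  -- symmetry of `A θ₀`
  have hAsymm : (A θ₀)ᵀ = A θ₀ := by
    ext i j
    rw [Matrix.transpose_apply]
    by_contra hne
    set d := |A θ₀ j i - A θ₀ i j| with hd
    have hdpos : 0 < d := abs_pos.mpr (sub_ne_zero.mpr hne)
    obtain ⟨T, hT⟩ := ((hHess (d / 4) (by positivity)).eventually_lt_const zero_lt_one).exists
    have : ∃ ω, ω ∉ {ω | ∃ θ ∈ Metric.closedBall θ₀ r, ∃ i j : Fin q,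
            d / 4 < |hessMat (LT T ω) θ i j - A θ i j|} := by
      by_contra hall
      push Not at hall
      rw [Set.eq_univ_of_forall hall, measure_univ] at hT
      exact lt_irrefl _ hT
    obtain ⟨ω, hω⟩ := this
    have hω' : ∀ i j, |hessMat (LT T ω) θ₀ i j - A θ₀ i j| ≤ d / 4 := by
      intro i j
      by_contra hc
      exact hω ⟨θ₀, hθK, i, j, not_le.mp hc⟩
    have h1 := hω' i j
    have h2 := hω' j i
    rw [hessMat_symm hU (hC2 T ω) hθ₀ j i] at h2
    have h3 : d ≤ d / 4 + d / 4 := by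
      have : A θ₀ j i - A θ₀ i j = (hessMat (LT T ω) θ₀ i j - A θ₀ i j)
        - (hessMat (LT T ω) θ₀ i j - A θ₀ j i) := by ring
      calc d = |A θ₀ j i - A θ₀ i j| := hd
        _ ≤ _ := by rw [this]; exact (abs_sub _ _).trans (add_le_add h1 h2)
    linarith
  set R := (A θ₀)⁻¹ with hRdef
  have hRsymm : Rᵀ = R := by rw [hRdef, Matrix.transpose_nonsing_inv, hAsymm]
  set N := Matrix.toEuclideanCLM (𝕜 := ℝ) R with hN
  set M := Matrix.toEuclideanCLM (𝕜 := ℝ) (A θ₀) with hM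
  have hNM : ∀ x, N (M x) = x := by
    intro x
    have : N * M = 1 := by
      rw [hN, hM, ← map_mul, hRdef, Matrix.nonsing_inv_mul _ (isUnit_iff_ne_zero.mpr hAnonsing),
        map_one]
    exact congrArg (fun L => L x) this
  -- measurable version of the score
  set S : ℕ → Ω → EuclideanSpace ℝ (Fin q) :=
    fun T ω => (Real.sqrt T) • gradient (LT T ω) θ₀ with hSdef
  have hev := eventually_aemeasurable P S νB hS
  set S' : ℕ → Ω → EuclideanSpace ℝ (Fin q) :=
    fun T => if AEMeasurable (S T) P then S T else 0 with hS'def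
  have hS'S : ∀ᶠ T in atTop, S' T = S T := by
    filter_upwards [hev] with T hT
    simp [hS'def, hT]
  have hS'm : ∀ T, AEMeasurable (S' T) P := by
    intro T
    by_cases h : AEMeasurable (S T) P
    · simpa [hS'def, h] using h
    · simp only [hS'def, h, if_false]
      exact measurable_zero.aemeasurable
  have hS'dist : MeasureTheory.TendstoInDistribution S' atTop
      (id : EuclideanSpace ℝ (Fin q) → _) (fun _ => P) νB := by
    refine ⟨hS'm, aemeasurable_id, ?_⟩
    refine ProbabilityMeasure.tendsto_iff_forall_integral_tendsto.mpr ?_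
    intro f
    have := hS f
    change Tendsto (fun T => ∫ x, f x ∂(Measure.map (S' T) P)) atTop
      (nhds (∫ x, f x ∂(Measure.map id νB)))
    rw [Measure.map_id]
    refine this.congr' ?_
    filter_upwards [hS'S] with T hT
    rw [hT]
  have hdist : MeasureTheory.TendstoInDistribution (fun T => (fun x => -(N x)) ∘ S' T) atTop
      ((fun x => -(N x)) ∘ id) (fun _ => P) νB :=
    hS'dist.continuous_comp (by fun_prop)
  set X : ℕ → Ω → EuclideanSpace ℝ (Fin q) :=
    fun T ω => (Real.sqrt T) • (θhat T ω - θ₀) with hX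
  have hXm : ∀ T, AEMeasurable (X T) P := fun T =>
    (((hθhatMeas T).sub_const θ₀).const_smul (Real.sqrt T)).aemeasurable
  have hdiff : TendstoInMeasure P (X - fun T => (fun x => -(N x)) ∘ S' T) atTop 0 := by
    rw [tendstoInMeasure_iff_norm]
    intro ε hε
    rw [ENNReal.tendsto_nhds_zero]
    intro η hη
    have hη3 : 0 < η / 3 := ENNReal.div_pos hη.ne' (by norm_num)
    obtain ⟨m, hm, htight⟩ := tight_of_tendsto _ _ hS'dist.tendsto (η / 3) hη3
    obtain ⟨κ, hκ, hκ1, hκ2⟩ : ∃ κ : ℝ, 0 < κ ∧ κ * ‖N‖ ≤ 1 / 2 ∧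
        2 * ‖N‖ ^ 2 * κ * m < ε := by
      have t1 : Tendsto (fun κ : ℝ => κ * ‖N‖) (nhdsWithin 0 (Set.Ioi 0)) (nhds 0) := by
        have : Continuous fun κ : ℝ => κ * ‖N‖ := by fun_prop
        simpa using (this.tendsto 0).mono_left nhdsWithin_le_nhds
      have t2 : Tendsto (fun κ : ℝ => 2 * ‖N‖ ^ 2 * κ * m) (nhdsWithin 0 (Set.Ioi 0))
          (nhds 0) := by
        have : Continuous fun κ : ℝ => 2 * ‖N‖ ^ 2 * κ * m := by fun_prop
        simpa using (this.tendsto 0).mono_left nhdsWithin_le_nhds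
      obtain ⟨κ, h1, h2, h3⟩ := ((t1.eventually_le_const (by norm_num : (0 : ℝ) < 1 / 2)).and
        ((t2.eventually_lt_const hε).and self_mem_nhdsWithin)).exists
      exact ⟨κ, h3, h1, h2⟩
    set δ : ℝ := κ / (2 * ((q : ℝ) ^ 2 + 1)) with hδ
    have hδpos : 0 < δ := by positivity
    have hδκ : (q : ℝ) ^ 2 * (2 * δ) ≤ κ := by
      have : ((q : ℝ) ^ 2 + 1) * (2 * δ) = κ := by rw [hδ]; field_simp
      nlinarith
    obtain ⟨ρ, hρ, hρr, hρA⟩ : ∃ ρ : ℝ, 0 < ρ ∧ ρ ≤ r ∧ ∀ x ∈ Metric.closedBall θ₀ ρ, ∀ i j,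
        |A x i j - A θ₀ i j| ≤ δ := by
      have hcA : ∀ᶠ x in nhds θ₀, ∀ i j, |A x i j - A θ₀ i j| ≤ δ := by
        have hAat : ContinuousAt A θ₀ := hAcont.continuousAt (Metric.closedBall_mem_nhds θ₀ hr)
        rw [eventually_all]
        intro i
        rw [eventually_all]
        intro j
        have hc : ContinuousAt (fun x => A x i j) θ₀ :=
          (continuous_apply_apply i j).continuousAt.comp hAat
        have := (Metric.continuousAt_iff'.mp hc) δ hδpos
        filter_upwards [this] with x hx
        rw [Real.dist_eq] at hx
        exact hx.le
      obtain ⟨ρ, hρ, hsub⟩ := Metric.nhds_basis_closedBall.eventually_iff.mp hcA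
      refine ⟨min ρ r, lt_min hρ hr, min_le_right _ _, fun x hx => hsub ?_⟩
      exact Metric.closedBall_subset_closedBall (min_le_left _ _) hx
    have hB1 := (ENNReal.tendsto_nhds_zero.mp (hHess δ hδpos)) (η / 3) hη3
    have hB2 := (ENNReal.tendsto_nhds_zero.mp (hconsistent ρ hρ)) (η / 3) hη3
    filter_upwards [hB1, hB2, htight, hS'S] with T h1 h2 h3 h4
    have h3' : P {ω | m ≤ ‖S' T ω‖} ≤ η / 3 := by
      refine le_trans (le_of_eq ?_) h3
      change _ = (Measure.map (S' T) P) {x | m ≤ ‖x‖}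
      rw [Measure.map_apply_of_aemeasurable (hS'm T)
        (isClosed_le continuous_const continuous_norm).measurableSet]
      rfl
    refine (measure_mono (t := {ω | m ≤ ‖S' T ω‖} ∪ ({ω | ∃ θ ∈ Metric.closedBall θ₀ r,
      ∃ i j : Fin q, δ < |hessMat (LT T ω) θ i j - A θ i j|} ∪ {ω | ρ < ‖θhat T ω - θ₀‖}))
      ?_).trans ?_
    · intro ω hω
      by_contra hc
      simp only [Set.mem_union, not_or] at hc
      obtain ⟨c1, c2, c3⟩ := hc
      have c1' : ‖S' T ω‖ < m := not_le.mp c1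
      have c3' : ‖θhat T ω - θ₀‖ ≤ ρ := not_lt.mp c3
      have hsubK : Metric.closedBall θ₀ ρ ⊆ Metric.closedBall θ₀ r :=
        Metric.closedBall_subset_closedBall hρr
      have hmem : θhat T ω ∈ U := hKU (hsubK (by simpa [dist_eq_norm] using c3'))
      have hcb := core_bound hU (hC2 T ω) (hsubK.trans hKU) c3' (A θ₀) (δ := 2 * δ)
        (by positivity) (fun x hx i j => by
          have e1 : |hessMat (LT T ω) x i j - A x i j| ≤ δ := by
            by_contra hcc
            exact c2 ⟨x, hsubK hx, i, j, not_le.mp hcc⟩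
          have e2 := hρA x hx i j
          calc _ ≤ |hessMat (LT T ω) x i j - A x i j| + |A x i j - A θ₀ i j| :=
                abs_sub_le _ _ _
            _ ≤ 2 * δ := by linarith) (hcrit T ω hmem)
      have hsc : ‖S' T ω + M (X T ω)‖ ≤ κ * ‖X T ω‖ := by
        rw [h4]
        simp only [hSdef, hX, map_smul]
        rw [← smul_add, norm_smul, norm_smul]
        calc _ ≤ ‖Real.sqrt T‖ * (κ * ‖θhat T ω - θ₀‖) := by
              gcongr
              exact hcb.trans (by gcongr)
          _ = _ := by ring
      have hfin := solve_bound M N hNM (S' T ω) (X T ω) κ hκ.le hκ1 hsc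
      have hlt : ‖X T ω + N (S' T ω)‖ < ε := by
        refine (hfin.trans ?_).trans_lt hκ2
        gcongr
      have hω' : ε ≤ ‖X T ω + N (S' T ω)‖ := by
        simpa using hω
      linarith
    · refine (measure_union_le _ _).trans ?_
      refine (add_le_add h3' ((measure_union_le _ _).trans (add_le_add h1 h2))).trans ?_
      rw [← add_assoc, ENNReal.add_thirds]
  have hfinal := tendstoInDistribution_of_tendstoInMeasure_sub X _ hdist hdiff hXm
  refine ⟨νB.map (fun x => -(N x)),
    Measure.isProbabilityMeasure_map (by fun_prop), gaussian_map hgB R hRsymm, ?_⟩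
  intro f
  have := (ProbabilityMeasure.tendsto_iff_forall_integral_tendsto.mp hfinal.tendsto) f
  exact this
end

section
/- Let M(z) be an n×n real polynomial matrix with det M(z) not identically zero. Then M(z) is row-reduced if and only if for every 1×n polynomial row vector w(z) = (w₁(z),…,wₙ(z)), the degree of v(z) = w(z)M(z) equals max_{1≤j≤n} ( deg w_j(z) + r_j ), where r_j is the j-th row degree of M and degrees obey the convention deg 0 = −∞ (so that the maximum ranges effectively over j with w_j ≠ 0). -/
open Polynomial Matrix

/-- The i-th row degree of a polynomial matrix (with deg 0 = ⊥ = -∞). -/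
noncomputable def rowDegD {n : ℕ} (M : Matrix (Fin n) (Fin n) (Polynomial ℝ)) (i : Fin n) :
    WithBot ℕ :=
  Finset.univ.sup fun j => (M i j).degree

/-- The i-th row degree of a polynomial matrix, as a natural number. -/
noncomputable def rowDegN {n : ℕ} (M : Matrix (Fin n) (Fin n) (Polynomial ℝ)) (i : Fin n) : ℕ :=
  Finset.univ.sup fun j => (M i j).natDegree

/-- The leading-row-coefficient matrix: entry (i,j) is the coefficient of z^{rᵢ} in M_{ij}. -/
noncomputable def leadRC {n : ℕ} (M : Matrix (Fin n) (Fin n) (Polynomial ℝ)) :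
    Matrix (Fin n) (Fin n) ℝ :=
  Matrix.of fun i j => (M i j).coeff (rowDegN M i)

/-- A polynomial matrix is row-reduced if its leading-row-coefficient matrix is nonsingular. -/
def RowReduced {n : ℕ} (M : Matrix (Fin n) (Fin n) (Polynomial ℝ)) : Prop :=
  (leadRC M).det ≠ 0


lemma rowDegD_eq_aux {n : ℕ} (M : Matrix (Fin n) (Fin n) (Polynomial ℝ)) (hdet : M.det ≠ 0)
    (i : Fin n) : rowDegD M i = (rowDegN M i : WithBot ℕ) := by
  obtain ⟨j, hj⟩ : ∃ j, M i j ≠ 0 := by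
    by_contra! h
    exact hdet (Matrix.det_eq_zero_of_row_eq_zero i h)
  unfold rowDegD rowDegN
  apply le_antisymm
  · apply Finset.sup_le
    intro k hk
    refine degree_le_natDegree.trans ?_
    exact_mod_cast Finset.le_sup (f := fun j => (M i j).natDegree) hk
  · obtain ⟨k, hk, hk2⟩ := Finset.exists_mem_eq_sup Finset.univ ⟨j, Finset.mem_univ j⟩
      (fun j => (M i j).natDegree)
    rw [hk2]
    by_cases h0 : M i k = 0
    · simp only [h0, natDegree_zero]
      refine le_trans ?_ (Finset.le_sup (f := fun j => (M i j).degree) (Finset.mem_univ j))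
      exact zero_le_degree_iff.2 hj
    · rw [← degree_eq_natDegree h0]
      exact Finset.le_sup (f := fun j => (M i j).degree) hk

lemma natDegree_le_rowDegN_aux {n : ℕ} (M : Matrix (Fin n) (Fin n) (Polynomial ℝ))
    (i j : Fin n) : (M i j).natDegree ≤ rowDegN M i :=
  Finset.le_sup (f := fun j => (M i j).natDegree) (Finset.mem_univ j)

lemma coeff_aux {n : ℕ} (M : Matrix (Fin n) (Fin n) (Polynomial ℝ))
    (w : Fin n → Polynomial ℝ) (d : ℕ)
    (h : ∀ j, (w j).degree + (rowDegN M j : WithBot ℕ) ≤ d) (c : Fin n) :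
    (∑ j, w j * M j c).coeff d = ((fun j => (w j).coeff (d - rowDegN M j)) ᵥ* leadRC M) c := by
  rw [finsetSum_coeff]
  simp only [vecMul, dotProduct, leadRC, Matrix.of_apply]
  refine Finset.sum_congr rfl fun j _ => ?_
  by_cases h0 : w j = 0
  · simp [h0]
  have h1 := h j
  rw [degree_eq_natDegree h0] at h1
  have h2 : (w j).natDegree + rowDegN M j ≤ d := by exact_mod_cast h1
  have h3 : d = (d - rowDegN M j) + rowDegN M j := by omega
  conv_lhs => rw [h3]
  exact coeff_mul_add_eq_of_natDegree_le (by omega) (natDegree_le_rowDegN_aux M j c)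

lemma degree_le_aux {n : ℕ} (M : Matrix (Fin n) (Fin n) (Polynomial ℝ))
    (w : Fin n → Polynomial ℝ) (c : Fin n) :
    (∑ j, w j * M j c).degree ≤ Finset.univ.sup fun j => (w j).degree + rowDegD M j := by
  refine (degree_sum_le _ _).trans (Finset.sup_mono_fun fun j _ => ?_)
  rw [degree_mul]
  gcongr
  exact Finset.le_sup (f := fun c => (M j c).degree) (Finset.mem_univ c)

/-- predictable degree property. M is row-reduced iff for every polynomial
row vector w, deg (w M) = maxⱼ (deg wⱼ + rⱼ). -/
theorem stmt8 {n : ℕ} (M : Matrix (Fin n) (Fin n) (Polynomial ℝ)) (hdet : M.det ≠ 0) :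
    RowReduced M ↔
      ∀ w : Fin n → Polynomial ℝ,
        (Finset.univ.sup fun c : Fin n => (∑ j : Fin n, w j * M j c).degree) =
          Finset.univ.sup fun j : Fin n => (w j).degree + rowDegD M j := by
  constructor
  · intro hR w
    apply le_antisymm (Finset.sup_le fun c _ => degree_le_aux M w c)
    by_cases hbot : (Finset.univ.sup fun j : Fin n => (w j).degree + rowDegD M j) = ⊥
    · rw [hbot]; exact bot_le
    obtain ⟨d, hd⟩ := WithBot.ne_bot_iff_exists.1 hbot
    have hne : (Finset.univ : Finset (Fin n)).Nonempty := by
      by_contra h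
      rw [Finset.not_nonempty_iff_eq_empty] at h
      apply hbot
      rw [h, Finset.sup_empty]
    obtain ⟨k, -, hk⟩ := Finset.exists_mem_eq_sup Finset.univ hne
      (fun j : Fin n => (w j).degree + rowDegD M j)
    have hle : ∀ j, (w j).degree + (rowDegN M j : WithBot ℕ) ≤ (d : WithBot ℕ) := by
      intro j
      rw [← rowDegD_eq_aux M hdet]
      refine le_trans ?_ hd.ge
      exact Finset.le_sup (f := fun j : Fin n => (w j).degree + rowDegD M j) (Finset.mem_univ j)
    rw [← hd] at hk
    have hwk : w k ≠ 0 := by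
      intro h
      simp [h] at hk
    rw [rowDegD_eq_aux M hdet, degree_eq_natDegree hwk] at hk
    have hk' : d = (w k).natDegree + rowDegN M k :=
      WithBot.coe_injective (by rw [hk]; rfl)
    have hc : ∃ c, (∑ j, w j * M j c).coeff d ≠ 0 := by
      by_contra! h
      have h1 : (fun j => (w j).coeff (d - rowDegN M j)) ᵥ* leadRC M = 0 := by
        ext c
        rw [← coeff_aux M w d hle c, h c]; rfl
      have h2 := congrFun (Matrix.eq_zero_of_vecMul_eq_zero hR h1) k
      simp only [hk', Nat.add_sub_cancel, Pi.zero_apply] at h2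
      exact hwk (leadingCoeff_eq_zero.1 h2)
    obtain ⟨c, hc⟩ := hc
    rw [← hd]
    exact (le_degree_of_ne_zero hc).trans
      (Finset.le_sup (f := fun c => (∑ j : Fin n, w j * M j c).degree) (Finset.mem_univ c))
  · intro H hL
    obtain ⟨a, ha, haL⟩ := Matrix.exists_vecMul_eq_zero_iff.2 hL
    set d := Finset.univ.sup (rowDegN M) with hd
    have hrd : ∀ j, rowDegN M j ≤ d := fun j => Finset.le_sup (Finset.mem_univ j)
    let w : Fin n → Polynomial ℝ := fun j => C (a j) * X ^ (d - rowDegN M j)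
    have hle : ∀ j, (w j).degree + (rowDegN M j : WithBot ℕ) ≤ (d : WithBot ℕ) := by
      intro j
      calc (w j).degree + (rowDegN M j : WithBot ℕ)
          ≤ ((d - rowDegN M j : ℕ) : WithBot ℕ) + (rowDegN M j : WithBot ℕ) := by
            gcongr
            exact degree_C_mul_X_pow_le _ _
        _ = (d : WithBot ℕ) := by
            exact_mod_cast Nat.sub_add_cancel (hrd j)
    have hw : (fun j => (w j).coeff (d - rowDegN M j)) = a := by
      ext j
      simp [w]
    obtain ⟨k, hk⟩ := Function.ne_iff.1 ha
    have hge : (d : WithBot ℕ) ≤ Finset.univ.sup fun j : Fin n => (w j).degree + rowDegD M j := by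
      refine le_trans ?_ (Finset.le_sup (f := fun j : Fin n => (w j).degree + rowDegD M j)
        (Finset.mem_univ k))
      simp only [w]
      rw [rowDegD_eq_aux M hdet, degree_C_mul_X_pow _ hk]
      exact_mod_cast (Nat.sub_add_cancel (hrd k)).ge
    rw [← H w] at hge
    refine absurd hge (not_le.2 ?_)
    refine (Finset.sup_lt_iff (WithBot.bot_lt_coe d)).2 ?_
    intro c _
    refine lt_of_le_of_ne ?_ ?_
    · refine (degree_le_aux M w c).trans (Finset.sup_le fun j _ => ?_)
      rw [rowDegD_eq_aux M hdet]
      exact hle j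
    · intro h
      have h1 : (∑ j, w j * M j c).coeff d ≠ 0 := coeff_ne_zero_of_eq_degree h
      rw [coeff_aux M w d hle c, hw, haL] at h1
      exact h1 rfl
end

section
/- Let b(z), p(z), g(z) be n×n real polynomial matrices with b(z) = p(z) g(z), where g is row-reduced with row degrees r₁,…,rₙ, and suppose that every entry of b has degree at most q. Then for all i, j, the (i,j) entry of p satisfies deg p_{ij}(z) ≤ q − r_j. -/
open Polynomial Matrix

/-- if b = p g with g row-reduced with row degrees rⱼ and all entries of b
of degree at most q, then deg p_{ij} ≤ q - rⱼ (i.e. deg p_{ij} + rⱼ ≤ q). -/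
theorem stmt9 {n q : ℕ} (b p g : Matrix (Fin n) (Fin n) (Polynomial ℝ))
    (hdet : g.det ≠ 0) (hrr : RowReduced g) (hfac : b = p * g)
    (hbdeg : ∀ i j, (b i j).degree ≤ (q : WithBot ℕ)) :
    ∀ i j, (p i j).degree + rowDegD g j ≤ (q : WithBot ℕ) := by
  have key : ∀ i j, p i j ≠ 0 → (p i j).natDegree + rowDegN g j ≤ q := by
    intro i j hj
    obtain ⟨k, hk, hmax⟩ := Finset.exists_max_image
      (Finset.univ.filter fun k => p i k ≠ 0)
      (fun k => (p i k).natDegree + rowDegN g k) ⟨j, by simp [hj]⟩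
    have hk0 : p i k ≠ 0 := by simpa using hk
    refine (hmax j (by simp [hj])).trans ?_
    by_contra hlt
    have hlt : q < (p i k).natDegree + rowDegN g k := not_le.mp hlt
    obtain ⟨D, hD⟩ : ∃ D, D = (p i k).natDegree + rowDegN g k := ⟨_, rfl⟩
    rw [← hD] at hlt
    have hvec : (fun l => (p i l).coeff (D - rowDegN g l)) ᵥ* leadRC g = 0 := by
      funext m
      have hb : (b i m).coeff D = 0 :=
        coeff_eq_zero_of_degree_lt ((hbdeg i m).trans_lt (by exact_mod_cast hlt))
      rw [hfac, Matrix.mul_apply, finsetSum_coeff] at hb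
      rw [Pi.zero_apply, ← hb]
      simp only [Matrix.vecMul, dotProduct, leadRC, Matrix.of_apply]
      refine Finset.sum_congr rfl fun l _ => ?_
      by_cases hl : p i l = 0
      · simp [hl]
      · have h1 : (p i l).natDegree + rowDegN g l ≤ D := by
          rw [hD]
          exact hmax l (by simp [hl])
        have h2 : (g l m).natDegree ≤ rowDegN g l :=
          Finset.le_sup (f := fun j => (g l j).natDegree) (Finset.mem_univ m)
        have h3 := coeff_mul_add_eq_of_natDegree_le (f := p i l) (g := g l m)
          (df := D - rowDegN g l) (dg := rowDegN g l) (by omega) h2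
        rw [Nat.sub_add_cancel (by omega)] at h3
        exact h3.symm
    have hz := Matrix.eq_zero_of_vecMul_eq_zero hrr hvec
    have hzk := congrFun hz k
    simp only [hD, Nat.add_sub_cancel, Pi.zero_apply, coeff_natDegree,
      leadingCoeff_eq_zero] at hzk
    exact hk0 hzk
  intro i j
  by_cases h : p i j = 0
  · simp [h]
  · have h1 : rowDegD g j ≤ (rowDegN g j : WithBot ℕ) := by
      refine Finset.sup_le fun m _ => degree_le_natDegree.trans ?_
      exact_mod_cast Finset.le_sup (f := fun m => (g j m).natDegree) (Finset.mem_univ m)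
    calc (p i j).degree + rowDegD g j
        ≤ ((p i j).natDegree : WithBot ℕ) + (rowDegN g j : WithBot ℕ) :=
          add_le_add degree_le_natDegree h1
      _ ≤ (q : WithBot ℕ) := by exact_mod_cast key i j h
end
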